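/- arXiv:2212.12566 — 5 statements merged into one kernel-verified Lean document; each statement's English description precedes it below -/
import Mathlib

section
/- Let (L, I) be an integral system on a set X, let (f_n) be a sequence in L¹ increasing pointwise to a function f : X → (−∞,∞], and assume lim_n I¹(f_n) < ∞. Then the set {x ∈ X : f(x) = ∞} is null, the real-valued function equal to f on {f < ∞} and to 0 on {f = ∞} belongs to L¹, and its integral I¹ equals lim_n I¹(f_n). -/
open Filter Topology

/-- An integral system on a set `X`: a linear lattice `L` of real-valued functions on `X`
(a vector subspace of `ℝ^X` closed under pointwise max and min) together with a
preintegral `I` on it (a positive linear functional that is continuous in the sense that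
`I fₙ → 0` whenever `fₙ ∈ L` are nonnegative and decrease pointwise to `0`). -/
structure IntegralSystem (X : Type*) where
  L : Set (X → ℝ)
  I : (X → ℝ) → ℝ
  zero_mem : (0 : X → ℝ) ∈ L
  add_mem : ∀ ⦃f g : X → ℝ⦄, f ∈ L → g ∈ L → f + g ∈ L
  smul_mem : ∀ (c : ℝ) ⦃f : X → ℝ⦄, f ∈ L → c • f ∈ L
  sup_mem : ∀ ⦃f g : X → ℝ⦄, f ∈ L → g ∈ L → f ⊔ g ∈ L
  inf_mem : ∀ ⦃f g : X → ℝ⦄, f ∈ L → g ∈ L → f ⊓ g ∈ L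
  I_add : ∀ ⦃f g : X → ℝ⦄, f ∈ L → g ∈ L → I (f + g) = I f + I g
  I_smul : ∀ (c : ℝ) ⦃f : X → ℝ⦄, f ∈ L → I (c • f) = c * I f
  I_pos : ∀ ⦃f : X → ℝ⦄, f ∈ L → (∀ x, 0 ≤ f x) → 0 ≤ I f
  I_cont : ∀ f : ℕ → X → ℝ, (∀ n, f n ∈ L) → (∀ n x, 0 ≤ f n x) →
    (∀ n x, f (n + 1) x ≤ f n x) →
    (∀ x, Tendsto (fun n => f n x) atTop (𝓝 0)) →
    Tendsto (fun n => I (f n)) atTop (𝓝 0)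

variable {X : Type*}

/-- `f : X → (−∞,∞]` belongs to `L_↑` iff some sequence in `L` increases pointwise to `f`. -/
def MemLup (S : IntegralSystem X) (f : X → EReal) : Prop :=
  ∃ g : ℕ → X → ℝ, (∀ n, g n ∈ S.L) ∧ (∀ n x, g n x ≤ g (n + 1) x) ∧
    ∀ x, Tendsto (fun n => ((g n x : EReal))) atTop (𝓝 (f x))

/-- For `f ∈ L_↑`, `I_↑ f = lim I (g n)` for any sequence `(g n)` in `L` increasing
pointwise to `f`; the value does not depend on the chosen sequence, so we may define it as
the supremum of all such limits. -/
noncomputable def Iup (S : IntegralSystem X) (f : X → EReal) : EReal :=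
  sSup { c : EReal | ∃ g : ℕ → X → ℝ, (∀ n, g n ∈ S.L) ∧ (∀ n x, g n x ≤ g (n + 1) x) ∧
    (∀ x, Tendsto (fun n => ((g n x : EReal))) atTop (𝓝 (f x))) ∧
    Tendsto (fun n => ((S.I (g n) : EReal))) atTop (𝓝 c) }

/-- `L_↓ = −L_↑`. -/
def MemLdown (S : IntegralSystem X) (f : X → EReal) : Prop :=
  MemLup S (fun x => -(f x))

/-- `I_↓ f = −I_↑(−f)`. -/
noncomputable def Idown (S : IntegralSystem X) (f : X → EReal) : EReal :=
  -(Iup S (fun x => -(f x)))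

/-- The upper integral `Ī f = inf { I_↑ g : g ∈ L_↑, f ≤ g }` (with `inf ∅ = ∞`). -/
noncomputable def upperInt (S : IntegralSystem X) (f : X → EReal) : EReal :=
  sInf (Iup S '' { g | MemLup S g ∧ ∀ x, f x ≤ g x })

/-- The lower integral `I̲ f = sup { I_↓ g : g ∈ L_↓, g ≤ f }` (with `sup ∅ = −∞`). -/
noncomputable def lowerInt (S : IntegralSystem X) (f : X → EReal) : EReal :=
  sSup (Idown S '' { g | MemLdown S g ∧ ∀ x, g x ≤ f x })

/-- `f : X → ℝ` is `I`-integrable iff its lower and upper integrals coincide and are finite. -/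
def Integrable1 (S : IntegralSystem X) (f : X → ℝ) : Prop :=
  ∃ c : ℝ, lowerInt S (fun x => ((f x : EReal))) = (c : EReal) ∧
    upperInt S (fun x => ((f x : EReal))) = (c : EReal)

/-- The Daniell extension `I¹` of `I`: the common value of the lower and upper integrals of
an integrable function. -/
noncomputable def Int1 (S : IntegralSystem X) (f : X → ℝ) : ℝ :=
  (upperInt S (fun x => ((f x : EReal)))).toReal

namespace IntegralSystem

/-- `Maj S h a`: `h` is dominated by the limit of an increasing sequence of `L` with integrals at most `a`. -/
def Maj (S : IntegralSystem X) (h : X → EReal) (a : ℝ) : Prop :=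
  ∃ g : ℕ → X → ℝ, (∀ n, g n ∈ S.L) ∧ (∀ x, Monotone (fun n => g n x)) ∧
    (∀ x (r : ℝ), (r : EReal) < h x → ∃ n, r < g n x) ∧ ∀ n, S.I (g n) ≤ a

lemma neg_mem (S : IntegralSystem X) {f : X → ℝ} (hf : f ∈ S.L) : -f ∈ S.L := by
  simpa using S.smul_mem (-1) hf

lemma I_neg (S : IntegralSystem X) {f : X → ℝ} (hf : f ∈ S.L) : S.I (-f) = - S.I f := by
  simpa using S.I_smul (-1) hf

lemma sub_mem (S : IntegralSystem X) {f g : X → ℝ} (hf : f ∈ S.L) (hg : g ∈ S.L) :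
    f - g ∈ S.L := by
  rw [sub_eq_add_neg]; exact S.add_mem hf (S.neg_mem hg)

lemma I_sub (S : IntegralSystem X) {f g : X → ℝ} (hf : f ∈ S.L) (hg : g ∈ S.L) :
    S.I (f - g) = S.I f - S.I g := by
  rw [sub_eq_add_neg, S.I_add hf (S.neg_mem hg), S.I_neg hg]; ring

lemma I_mono (S : IntegralSystem X) {f g : X → ℝ} (hf : f ∈ S.L) (hg : g ∈ S.L)
    (h : ∀ x, f x ≤ g x) : S.I f ≤ S.I g := by
  have := S.I_pos (S.sub_mem hg hf) (fun x => by simpa using h x)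
  rw [S.I_sub hg hf] at this; linarith

lemma I_zero (S : IntegralSystem X) : S.I 0 = 0 := by
  simpa using S.I_smul 0 S.zero_mem

lemma key (S : IntegralSystem X) {g : ℕ → X → ℝ} {k : X → ℝ} {a : ℝ} (hg : ∀ n, g n ∈ S.L)
    (hm : ∀ x, Monotone (fun n => g n x)) (hk : k ∈ S.L)
    (hd : ∀ x (r : ℝ), r < k x → ∃ n, r < g n x) (ha : ∀ n, S.I (g n) ≤ a) : S.I k ≤ a := by
  have hmem : ∀ n, (k - g n) ⊔ 0 ∈ S.L := fun n => S.sup_mem (S.sub_mem hk (hg n)) S.zero_mem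
  have h0 : Tendsto (fun n => S.I ((k - g n) ⊔ 0)) atTop (𝓝 0) := by
    apply S.I_cont _ hmem
    · intro n x; simp
    · intro n x
      have := hm x (Nat.le_succ n)
      simp only [Pi.sup_apply, Pi.sub_apply, Pi.zero_apply]
      apply max_le_max _ le_rfl
      simp only [Nat.succ_eq_add_one] at this
      linarith
    · intro x
      rw [Metric.tendsto_atTop]
      intro ε hε
      obtain ⟨N, hN⟩ := hd x (k x - ε) (by linarith)
      refine ⟨N, fun n hn => ?_⟩
      have := hm x hn
      simp only [] at this
      simp only [Pi.sup_apply, Pi.sub_apply, Pi.zero_apply, Real.dist_eq, sub_zero]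
      rw [abs_of_nonneg (le_max_right _ _)]
      apply max_lt <;> linarith
  have h1 : ∀ n, S.I k - a ≤ S.I ((k - g n) ⊔ 0) := by
    intro n
    have := S.I_mono (S.sub_mem hk (hg n)) (hmem n) (fun x => by simp)
    rw [S.I_sub hk (hg n)] at this
    linarith [ha n]
  have := ge_of_tendsto' h0 h1
  linarith

lemma Maj.upperInt_le {S : IntegralSystem X} {h : X → EReal} {a : ℝ} (H : S.Maj h a) :
    upperInt S h ≤ a := by
  obtain ⟨g, hg, hm, hd, ha⟩ := H
  have hmE : ∀ x, Monotone (fun n => (g n x : EReal)) :=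
    fun x i j hij => EReal.coe_le_coe_iff.2 (hm x hij)
  refine le_trans (b := Iup S (fun x => ⨆ n, (g n x : EReal))) (sInf_le ⟨fun x => ⨆ n, (g n x : EReal), ⟨⟨g, hg,
    fun n x => hm x (Nat.le_succ n), fun x => tendsto_atTop_iSup (hmE x)⟩, ?_⟩, rfl⟩) ?_
  · intro x
    apply le_of_forall_lt
    intro c hc
    obtain ⟨r, h1, h2⟩ := EReal.lt_iff_exists_real_btwn.1 hc
    obtain ⟨n, hn⟩ := hd x r h2
    exact h1.trans ((EReal.coe_lt_coe_iff.2 hn).trans_le (le_iSup (fun n => (g n x : EReal)) n))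
  · apply sSup_le
    rintro c ⟨g', hg', hm', hl', hc⟩
    refine le_of_tendsto' hc (fun n => EReal.coe_le_coe_iff.2 ?_)
    refine S.key hg hm (hg' n) ?_ ha
    intro x r hr
    have h1 : (g' n x : EReal) ≤ ⨆ n, (g n x : EReal) :=
      Monotone.ge_of_tendsto (f := fun n => (g' n x : EReal))
        (monotone_nat_of_le_succ fun n => EReal.coe_le_coe_iff.2 (hm' n x)) (hl' x) n
    obtain ⟨m, hm⟩ := lt_iSup_iff.1 ((EReal.coe_lt_coe_iff.2 hr).trans_le h1)
    exact ⟨m, EReal.coe_lt_coe_iff.1 hm⟩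

lemma maj_of_upperInt_lt {S : IntegralSystem X} {h : X → EReal} {a : ℝ}
    (H : upperInt S h < a) : S.Maj h a := by
  obtain ⟨_, ⟨G, ⟨⟨g, hg, hm, hl⟩, hG⟩, rfl⟩, hlt⟩ := sInf_lt_iff.1 H
  have hm' : ∀ x, Monotone (fun n => g n x) := fun x => monotone_nat_of_le_succ fun n => hm n x
  refine ⟨g, hg, hm', ?_, ?_⟩
  · intro x r hr
    have := (hl x).eventually (lt_mem_nhds (hr.trans_le (hG x)))
    obtain ⟨n, hn⟩ := this.exists
    exact ⟨n, EReal.coe_lt_coe_iff.1 hn⟩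
  · intro n
    have hIm : Monotone (fun n => (S.I (g n) : EReal)) := fun i j hij =>
      EReal.coe_le_coe_iff.2 (S.I_mono (hg i) (hg j) fun x => hm' x hij)
    have h1 : (⨆ n, (S.I (g n) : EReal)) ≤ Iup S G :=
      le_sSup ⟨g, hg, hm, hl, tendsto_atTop_iSup hIm⟩
    exact EReal.coe_le_coe_iff.1
      (((le_iSup (fun n => (S.I (g n) : EReal)) n).trans h1).trans hlt.le)

lemma lowerInt_eq (S : IntegralSystem X) (h : X → EReal) :
    lowerInt S h = - upperInt S (fun x => - h x) := by
  apply le_antisymm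
  · apply sSup_le
    rintro _ ⟨g, ⟨hg, hle⟩, rfl⟩
    apply EReal.neg_le_neg_iff.2
    exact sInf_le ⟨_, ⟨hg, fun x => EReal.neg_le_neg_iff.2 (hle x)⟩, rfl⟩
  · rw [EReal.neg_le]
    apply le_sInf
    rintro _ ⟨G, ⟨hG, hle⟩, rfl⟩
    rw [EReal.neg_le]
    refine le_sSup ⟨fun x => - G x, ⟨?_, fun x => EReal.neg_le.1 (hle x)⟩, ?_⟩
    · simpa [MemLdown] using hG
    · simp [Idown]

lemma Maj.mono {S : IntegralSystem X} {h h' : X → EReal} {a a' : ℝ} (H : S.Maj h a)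
    (hh : ∀ x, h' x ≤ h x) (haa : a ≤ a') : S.Maj h' a' := by
  obtain ⟨g, hg, hm, hd, ha⟩ := H
  exact ⟨g, hg, hm, fun x r hr => hd x r (hr.trans_le (hh x)), fun n => (ha n).trans haa⟩

lemma Maj.add {S : IntegralSystem X} {h h' : X → ℝ} {a a' : ℝ}
    (H : S.Maj (fun x => (h x : EReal)) a) (H' : S.Maj (fun x => (h' x : EReal)) a') :
    S.Maj (fun x => ((h x + h' x : ℝ) : EReal)) (a + a') := by
  obtain ⟨g, hg, hm, hd, ha⟩ := H
  obtain ⟨g', hg', hm', hd', ha'⟩ := H'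
  refine ⟨fun n => g n + g' n, fun n => S.add_mem (hg n) (hg' n),
    fun x => (hm x).add (hm' x), ?_, ?_⟩
  · intro x r hr
    rw [EReal.coe_lt_coe_iff] at hr
    obtain ⟨n, hn⟩ := hd x (h x - (h x + h' x - r) / 2)
      (EReal.coe_lt_coe_iff.2 (by linarith))
    obtain ⟨m, hmm⟩ := hd' x (h' x - (h x + h' x - r) / 2)
      (EReal.coe_lt_coe_iff.2 (by linarith))
    refine ⟨max n m, ?_⟩
    have h1 := hm x (le_max_left n m)
    have h2 := hm' x (le_max_right n m)
    simp only [Pi.add_apply] at *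
    linarith
  · intro n
    rw [S.I_add (hg n) (hg' n)]
    linarith [ha n, ha' n]

lemma Maj.nonneg {S : IntegralSystem X} {h : X → EReal} {a : ℝ} (H : S.Maj h a)
    (hh : ∀ x, 0 ≤ h x) : 0 ≤ a := by
  obtain ⟨g, hg, hm, hd, ha⟩ := H
  have := S.key hg hm S.zero_mem
    (fun x r hr => hd x r ((EReal.coe_lt_coe_iff.2 hr).trans_le (hh x))) ha
  rwa [S.I_zero] at this

/-- For nonnegative `h` the dominating sequence can be taken nonnegative. -/
lemma Maj.exists_nonneg {S : IntegralSystem X} {h : X → EReal} {a : ℝ} (H : S.Maj h a)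
    (hh : ∀ x, 0 ≤ h x) : ∃ g : ℕ → X → ℝ, (∀ n, g n ∈ S.L) ∧ (∀ x, Monotone (fun n => g n x)) ∧
    (∀ x (r : ℝ), (r : EReal) < h x → ∃ n, r < g n x) ∧ (∀ n, S.I (g n) ≤ a) ∧
    ∀ n x, 0 ≤ g n x := by
  obtain ⟨g, hg, hm, hd, ha⟩ := H
  refine ⟨fun n => g n ⊔ 0, fun n => S.sup_mem (hg n) S.zero_mem, ?_, ?_, ?_, ?_⟩
  · intro x i j hij
    exact max_le_max (hm x hij) le_rfl
  · intro x r hr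
    obtain ⟨n, hn⟩ := hd x r hr
    exact ⟨n, lt_max_of_lt_left hn⟩
  · intro n
    refine S.key hg hm (S.sup_mem (hg n) S.zero_mem) ?_ ha
    intro x r hr
    rcases lt_max_iff.1 hr with h1 | h1
    · exact ⟨n, h1⟩
    · exact hd x r ((EReal.coe_lt_coe_iff.2 h1).trans_le (hh x))
  · intro n x
    exact le_max_right _ _

lemma upperInt_eq {S : IntegralSystem X} {f : X → ℝ} {c : ℝ}
    (h1 : ∀ ε > 0, S.Maj (fun x => (f x : EReal)) (c + ε))
    (h2 : ∀ ε > 0, S.Maj (fun x => ((- f x : ℝ) : EReal)) (-c + ε)) :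
    upperInt S (fun x => (f x : EReal)) = c := by
  apply le_antisymm
  · apply EReal.le_of_forall_lt_iff_le.1
    intro z hz
    rw [EReal.coe_lt_coe_iff] at hz
    have := (h1 (z - c) (by linarith)).upperInt_le
    simpa using this
  · by_contra! hlt
    obtain ⟨a, ha1, ha2⟩ := EReal.lt_iff_exists_real_btwn.1 hlt
    rw [EReal.coe_lt_coe_iff] at ha2
    have := ((maj_of_upperInt_lt ha1).add (h2 ((c - a) / 2) (by linarith))).nonneg
      (fun x => by simp)
    linarith

lemma integrable_of_maj {S : IntegralSystem X} {f : X → ℝ} {c : ℝ}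
    (h1 : ∀ ε > 0, S.Maj (fun x => (f x : EReal)) (c + ε))
    (h2 : ∀ ε > 0, S.Maj (fun x => ((- f x : ℝ) : EReal)) (-c + ε)) :
    Integrable1 S f ∧ Int1 S f = c := by
  have hu := upperInt_eq h1 h2
  have hl := upperInt_eq (f := fun x => - f x) (c := -c) h2 (by simpa using h1)
  refine ⟨⟨c, ?_, hu⟩, by simp [Int1, hu]⟩
  rw [lowerInt_eq]
  simp only [EReal.coe_neg] at hl
  rw [hl]; simp

lemma maj_of_integrable {S : IntegralSystem X} {f : X → ℝ} (hf : Integrable1 S f) :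
    (∀ ε > 0, S.Maj (fun x => (f x : EReal)) (Int1 S f + ε)) ∧
    (∀ ε > 0, S.Maj (fun x => ((- f x : ℝ) : EReal)) (- Int1 S f + ε)) := by
  obtain ⟨c, hl, hu⟩ := hf
  have hI : Int1 S f = c := by simp [Int1, hu]
  rw [hI]
  refine ⟨fun ε hε => maj_of_upperInt_lt ?_, fun ε hε => maj_of_upperInt_lt ?_⟩
  · rw [hu, EReal.coe_lt_coe_iff]; linarith
  · rw [lowerInt_eq] at hl
    have : upperInt S (fun x => -(f x : EReal)) = ((-c : ℝ) : EReal) := by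
      rw [EReal.coe_neg, ← hl, neg_neg]
    simp only [EReal.coe_neg (f _)]
    rw [this, EReal.coe_lt_coe_iff]; linarith

lemma sum_mem_I (S : IntegralSystem X) (g : ℕ → X → ℝ) (hg : ∀ n, g n ∈ S.L) (k : ℕ) :
    (∑ n ∈ Finset.range k, g n) ∈ S.L ∧
    S.I (∑ n ∈ Finset.range k, g n) = ∑ n ∈ Finset.range k, S.I (g n) := by
  induction k with
  | zero => simpa using ⟨S.zero_mem, S.I_zero⟩
  | succ k ih =>
    rw [Finset.sum_range_succ, Finset.sum_range_succ]
    exact ⟨S.add_mem ih.1 (hg k), by rw [S.I_add ih.1 (hg k), ih.2]⟩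

lemma maj_lim {S : IntegralSystem X} {f : ℕ → X → ℝ} {F : X → EReal}
    (hf : ∀ n, Integrable1 S (f n))
    (hmono : ∀ n x, f n x ≤ f (n + 1) x)
    (hlim : ∀ x, Tendsto (fun n => ((f n x : EReal))) atTop (𝓝 (F x)))
    {c : ℝ} (hc : ∀ n, Int1 S (f n) ≤ c) {ε : ℝ} (hε : 0 < ε) : S.Maj F (c + ε) := by
  have hd : ∀ n, S.Maj (fun x => ((f (n + 1) x + - f n x : ℝ) : EReal))
      ((Int1 S (f (n + 1)) + ε / 8 * (1 / 2) ^ n) + (- Int1 S (f n) + ε / 8 * (1 / 2) ^ n)) :=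
    fun n => ((maj_of_integrable (hf (n + 1))).1 _ (by positivity)).add
      ((maj_of_integrable (hf n)).2 _ (by positivity))
  have hd' := fun n => (hd n).exists_nonneg (fun x => by
    have := hmono n x
    exact_mod_cast (by linarith : (0 : ℝ) ≤ f (n + 1) x + - f n x))
  choose g hg hm hdom hI hnn using hd'
  obtain ⟨g0, hg0, hm0, hdom0, hI0⟩ := (maj_of_integrable (hf 0)).1 (ε / 2) (by positivity)
  have hsum := fun k => S.sum_mem_I (fun n => g n k) (fun n => hg n k) k
  refine ⟨fun k => g0 k + ∑ n ∈ Finset.range k, g n k,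
    fun k => S.add_mem (hg0 k) (hsum k).1, ?_, ?_, ?_⟩
  · intro x i j hij
    simp only [Pi.add_apply, Finset.sum_apply]
    apply add_le_add (hm0 x hij)
    calc ∑ n ∈ Finset.range i, g n i x ≤ ∑ n ∈ Finset.range i, g n j x :=
          Finset.sum_le_sum fun n _ => hm n x hij
      _ ≤ ∑ n ∈ Finset.range j, g n j x :=
          Finset.sum_le_sum_of_subset_of_nonneg (Finset.range_mono hij) fun n _ _ => hnn n j x
  · intro x r hr
    obtain ⟨m, hmr⟩ := ((hlim x).eventually (lt_mem_nhds hr)).exists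
    rw [EReal.coe_lt_coe_iff] at hmr
    -- partial sums dominate `f m`
    have hpart : ∀ m (r : ℝ), r < f m x →
        ∃ K, ∀ k ≥ K, r < g0 k x + ∑ n ∈ Finset.range m, g n k x := by
      intro m
      induction m with
      | zero =>
        intro r hr
        obtain ⟨K, hK⟩ := hdom0 x r (EReal.coe_lt_coe_iff.2 hr)
        refine ⟨K, fun k hk => ?_⟩
        have := hm0 x hk
        simp only [Finset.range_zero, Finset.sum_empty] at *
        linarith
      | succ m ih =>
        intro r hr
        obtain ⟨K, hK⟩ := ih (f m x - (f (m + 1) x - r) / 2) (by linarith)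
        obtain ⟨K', hK'⟩ := hdom m x (f (m + 1) x + - f m x - (f (m + 1) x - r) / 2)
          (EReal.coe_lt_coe_iff.2 (by linarith))
        refine ⟨max K K', fun k hk => ?_⟩
        have h1 := hK k (le_trans (le_max_left _ _) hk)
        have h2 := hm m x (le_trans (le_max_right _ _) hk)
        simp only [Finset.sum_range_succ] at *
        linarith
    obtain ⟨K, hK⟩ := hpart m r hmr
    refine ⟨max K m, ?_⟩
    have h1 := hK _ (le_max_left K m)
    have h2 : ∑ n ∈ Finset.range m, g n (max K m) x
        ≤ ∑ n ∈ Finset.range (max K m), g n (max K m) x :=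
      Finset.sum_le_sum_of_subset_of_nonneg (Finset.range_mono (le_max_right _ _))
        fun n _ _ => hnn n _ x
    simp only [Pi.add_apply, Finset.sum_apply]
    linarith
  · intro k
    simp only []
    rw [S.I_add (hg0 k) (hsum k).1, (hsum k).2]
    have hs : ∀ k, ∑ n ∈ Finset.range k, ((Int1 S (f (n + 1)) + ε / 8 * (1 / 2) ^ n) +
        (- Int1 S (f n) + ε / 8 * (1 / 2) ^ n))
        = Int1 S (f k) - Int1 S (f 0) + ε / 2 * (1 - (1 / 2) ^ k) := by
      intro k
      induction k with
      | zero => simp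
      | succ k ih => rw [Finset.sum_range_succ, ih, pow_succ]; ring
    have h1 : ∑ n ∈ Finset.range k, S.I (g n k) ≤ _ :=
      Finset.sum_le_sum fun n _ => hI n k
    rw [hs] at h1
    have h2 : 0 ≤ ε / 2 * (1 / 2) ^ k := by positivity
    nlinarith [hI0 k, hc k]

/-- A function of finite upper integral is infinite only on a null set. -/
lemma maj_top {S : IntegralSystem X} {F : X → EReal} {a : ℝ} (H : S.Maj F a) {ε : ℝ}
    (hε : 0 < ε) : ∃ g : ℕ → X → ℝ, (∀ n, g n ∈ S.L) ∧ (∀ x, Monotone (fun n => g n x)) ∧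
    (∀ x, F x = ⊤ → ∀ r : ℝ, ∃ n, r < g n x) ∧ (∀ n, S.I (g n) ≤ ε) ∧ ∀ n x, 0 ≤ g n x := by
  obtain ⟨g, hg, hm, hd, ha⟩ := H
  have hM : 0 ≤ a - S.I (g 0) := by linarith [ha 0]
  set M := a - S.I (g 0) with hMdef
  set δ := ε / (M + 1) with hδ
  have hδp : 0 < δ := by positivity
  refine ⟨fun n => δ • (g n - g 0), fun n => S.smul_mem _ (S.sub_mem (hg n) (hg 0)), ?_, ?_, ?_, ?_⟩
  · intro x i j hij
    have := hm x hij
    simp only [Pi.smul_apply, Pi.sub_apply, smul_eq_mul] at *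
    gcongr
  · intro x hx r
    obtain ⟨n, hn⟩ := hd x (r / δ + g 0 x) (by rw [hx]; exact EReal.coe_lt_top _)
    refine ⟨n, ?_⟩
    simp only [Pi.smul_apply, Pi.sub_apply, smul_eq_mul]
    rw [mul_comm, ← div_lt_iff₀ hδp]
    linarith
  · intro n
    simp only []
    rw [S.I_smul _ (S.sub_mem (hg n) (hg 0)), S.I_sub (hg n) (hg 0)]
    calc δ * (S.I (g n) - S.I (g 0)) ≤ δ * (M + 1) := by
          gcongr; linarith [ha n]
      _ = ε := by rw [hδ]; field_simp
  · intro n x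
    have := hm x (Nat.zero_le n)
    simp only [Pi.smul_apply, Pi.sub_apply, smul_eq_mul] at *
    exact mul_nonneg hδp.le (by linarith)

end IntegralSystem

/-- Strengthened monotone convergence: if `(f n)` in `L¹` increases pointwise to
`F : X → (−∞,∞]` and `I¹ (f n)` converges to a real number `c` (i.e. `lim I¹ (f n) < ∞`),
then `{F = ∞}` is a null set, the real-valued function equal to `F` on `{F < ∞}` and to `0`
on `{F = ∞}` is integrable, and its integral is `c = lim I¹ (f n)`. -/
theorem daniell_monotone_convergence_ae (S : IntegralSystem X) (f : ℕ → X → ℝ) (F : X → EReal)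
    (hf : ∀ n, Integrable1 S (f n))
    (hmono : ∀ n x, f n x ≤ f (n + 1) x)
    (hlim : ∀ x, Tendsto (fun n => ((f n x : EReal))) atTop (𝓝 (F x)))
    (c : ℝ) (hc : Tendsto (fun n => Int1 S (f n)) atTop (𝓝 c)) :
    upperInt S (fun x => if F x = ⊤ then (1 : EReal) else 0) = 0 ∧
    Integrable1 S (fun x => (F x).toReal) ∧
    Int1 S (fun x => (F x).toReal) = c := by
  have hIc : ∀ n, Int1 S (f n) ≤ c := by
    have hm : Monotone (fun n => Int1 S (f n)) := by
      refine monotone_nat_of_le_succ fun n => ?_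
      apply le_of_forall_pos_le_add
      intro ε hε
      have h1 := ((IntegralSystem.maj_of_integrable (hf (n + 1))).1 (ε / 2) (by positivity)).add
        ((IntegralSystem.maj_of_integrable (hf n)).2 (ε / 2) (by positivity))
      have := h1.nonneg (fun x => by
        have := hmono n x
        exact_mod_cast (by linarith : (0 : ℝ) ≤ f (n + 1) x + - f n x))
      linarith
    exact fun n => hm.ge_of_tendsto hc n
  have hFm : ∀ ε > 0, S.Maj F (c + ε) :=
    fun ε hε => IntegralSystem.maj_lim hf hmono hlim hIc hε
  have hle : ∀ n x, (f n x : EReal) ≤ F x := fun n x =>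
    Monotone.ge_of_tendsto (f := fun n => (f n x : EReal))
      (monotone_nat_of_le_succ fun n => EReal.coe_le_coe_iff.2 (hmono n x)) (hlim x) n
  have hbot : ∀ x, F x ≠ ⊥ := fun x h => by
    have := hle 0 x
    rw [h] at this
    exact EReal.coe_ne_bot _ (le_bot_iff.1 this)
  refine ⟨?_, IntegralSystem.integrable_of_maj ?_ ?_⟩
  · apply le_antisymm
    · apply EReal.le_of_forall_lt_iff_le.1
      intro ε hε
      obtain ⟨g, hg, hm, hd, ha, hnn⟩ := IntegralSystem.maj_top (hFm 1 one_pos)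
        (EReal.coe_pos.1 hε)
      refine IntegralSystem.Maj.upperInt_le ⟨fun n => g n, hg, hm, ?_, ha⟩
      intro x r hr
      by_cases hx : F x = ⊤
      · exact hd x hx r
      · simp only [hx, if_false] at hr
        exact ⟨0, lt_of_lt_of_le (by exact_mod_cast hr) (hnn 0 x)⟩
    · by_contra! hlt
      obtain ⟨a, ha1, ha2⟩ := EReal.lt_iff_exists_real_btwn.1 hlt
      have := (IntegralSystem.maj_of_upperInt_lt ha1).nonneg (fun x => by split_ifs <;> simp)
      have h2 : a < 0 := by exact_mod_cast ha2
      linarith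
  · intro ε hε
    refine (hFm ε hε).mono (fun x => ?_) le_rfl
    by_cases hx : F x = ⊤
    · simp [hx]
    · rw [EReal.coe_toReal hx (hbot x)]
  · intro ε hε
    obtain ⟨N, hN⟩ := (hc.eventually (lt_mem_nhds (by linarith : c - ε / 3 < c))).exists
    obtain ⟨g, hg, hm, hd, ha, hnn⟩ := IntegralSystem.maj_top (hFm 1 one_pos)
      (by positivity : 0 < ε / 3)
    obtain ⟨g', hg', hm', hd', ha'⟩ := (IntegralSystem.maj_of_integrable (hf N)).2 (ε / 3)
      (by positivity)
    refine ⟨fun n => g' n + g n, fun n => S.add_mem (hg' n) (hg n),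
      fun x => (hm' x).add (hm x), ?_, ?_⟩
    · intro x r hr
      rw [EReal.coe_lt_coe_iff] at hr
      by_cases hx : F x = ⊤
      · obtain ⟨n, hn⟩ := hd x hx (r - g' 0 x)
        refine ⟨n, ?_⟩
        have := hm' x (Nat.zero_le n)
        simp only [Pi.add_apply] at *
        linarith
      · have h1 : f N x ≤ (F x).toReal := by
          have := hle N x
          rw [← EReal.coe_toReal hx (hbot x)] at this
          exact_mod_cast this
        obtain ⟨n, hn⟩ := hd' x r (EReal.coe_lt_coe_iff.2 (by linarith))
        refine ⟨n, ?_⟩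
        simp only [Pi.add_apply]
        linarith [hnn n x]
    · intro n
      simp only []
      rw [S.I_add (hg' n) (hg n)]
      linarith [ha n, ha' n]
end

section
/- (Transfer principle.) Let (L, I) be an integral system on a set X and (M, J) an integral system on a set Y, let ρ : X → [0,∞) be a function and φ : X → Y a map such that for every g ∈ M the function x ↦ ρ(x)·g(φ(x)) belongs to L and I(ρ·(g∘φ)) = J(g). Then for every J-integrable function g ∈ M¹, the function x ↦ ρ(x)·g(φ(x)) is I-integrable and I¹(ρ·(g∘φ)) = J¹(g). -/
open Filter Topology

variable {X : Type*}

theorem IntegralSystem.I_mono' (S : IntegralSystem X) {f g : X → ℝ} (hf : f ∈ S.L)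
    (hg : g ∈ S.L) (h : ∀ x, f x ≤ g x) : S.I f ≤ S.I g := by
  have hm : (-1 : ℝ) • f ∈ S.L := S.smul_mem (-1) hf
  have := S.I_pos (S.add_mem hg hm) (fun x => by simp; linarith [h x])
  rw [S.I_add hg hm, S.I_smul _ hf] at this
  linarith

theorem lemA (S : IntegralSystem X) (h : ℕ → X → ℝ) (hL : ∀ n, h n ∈ S.L)
    (hmono : ∀ n x, h n x ≤ h (n + 1) x)
    (hlim : ∀ x, ∀ ε > (0 : ℝ), ∃ n, -ε < h n x) :
    ∀ ε > (0 : ℝ), ∀ᶠ n in atTop, -ε < S.I (h n) := by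
  intro ε hε
  have hn : ∀ n, (-1 : ℝ) • h n ∈ S.L := fun n => S.smul_mem (-1) (hL n)
  have hk : ∀ n, ((-1 : ℝ) • h n) ⊔ 0 ∈ S.L := fun n => S.sup_mem (hn n) S.zero_mem
  have key := S.I_cont (fun n => ((-1 : ℝ) • h n) ⊔ 0) hk (fun n x => by simp)
    (fun n x => by
      simp only [Pi.sup_apply, Pi.smul_apply, smul_eq_mul, Pi.zero_apply]
      exact sup_le_sup_right (by linarith [hmono n x]) _)
    (fun x => by
      rw [Metric.tendsto_atTop]
      intro δ hδ
      obtain ⟨N, hN⟩ := hlim x δ hδ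
      refine ⟨N, fun n hnN => ?_⟩
      have hm : Monotone (fun n => h n x) := monotone_nat_of_le_succ (fun n => hmono n x)
      have := hm hnN
      simp only at this
      simp only [Pi.sup_apply, Pi.smul_apply, smul_eq_mul, Pi.zero_apply, Real.dist_eq, sub_zero]
      rw [abs_of_nonneg le_sup_right]
      exact max_lt (by linarith) hδ)
  filter_upwards [key.eventually (gt_mem_nhds hε)] with n hnε
  have h3 := S.I_mono' (hn n) (hk n) (fun x => by simp)
  rw [S.I_smul _ (hL n)] at h3
  linarith

theorem exists_lim (S : IntegralSystem X) (g : ℕ → X → ℝ) (hL : ∀ n, g n ∈ S.L)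
    (hmono : ∀ n x, g n x ≤ g (n + 1) x) :
    ∃ c : EReal, Tendsto (fun n => ((S.I (g n) : EReal))) atTop (𝓝 c) ∧
      ∀ n, (S.I (g n) : EReal) ≤ c := by
  have hm : Monotone (fun n => ((S.I (g n) : EReal))) :=
    monotone_nat_of_le_succ (fun n => EReal.coe_le_coe_iff.2
      (S.I_mono' (hL n) (hL (n+1)) (hmono n)))
  exact ⟨_, tendsto_atTop_iSup hm, fun n => le_iSup (fun n => ((S.I (g n) : EReal))) n⟩

theorem lemKey (S : IntegralSystem X) (g h : ℕ → X → ℝ) (hgL : ∀ n, g n ∈ S.L)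
    (hgm : ∀ n x, g n x ≤ g (n + 1) x) (hhL : ∀ n, h n ∈ S.L)
    (hhm : ∀ n x, h n x ≤ h (n + 1) x) (F : X → EReal)
    (hg : ∀ x, Tendsto (fun n => ((g n x : EReal))) atTop (𝓝 (F x)))
    (hh : ∀ x, Tendsto (fun n => ((h n x : EReal))) atTop (𝓝 (F x))) (c d : EReal)
    (hc : Tendsto (fun n => ((S.I (g n) : EReal))) atTop (𝓝 c))
    (hd : ∀ n, (S.I (h n) : EReal) ≤ d) : c ≤ d := by
  refine le_of_tendsto' hc (fun n => ?_)
  have hn : (-1 : ℝ) • g n ∈ S.L := S.smul_mem (-1) (hgL n)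
  have hA := lemA S (fun m => h m + (-1 : ℝ) • g n) (fun m => S.add_mem (hhL m) hn)
    (fun m x => by simpa using hhm m x)
    (fun x ε hε => by
      have hgF : ((g n x : ℝ) : EReal) ≤ F x := by
        have hmm : Monotone (fun n => ((g n x : EReal))) :=
          monotone_nat_of_le_succ (fun n => EReal.coe_le_coe_iff.2 (hgm n x))
        exact hmm.ge_of_tendsto (hg x) n
      have : ((g n x - ε : ℝ) : EReal) < F x :=
        lt_of_lt_of_le (EReal.coe_lt_coe_iff.2 (by linarith)) hgF
      obtain ⟨m, hm⟩ := ((hh x).eventually (lt_mem_nhds this)).exists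
      refine ⟨m, ?_⟩
      have := EReal.coe_lt_coe_iff.1 hm
      simp; linarith)
  refine EReal.le_of_forall_lt_iff_le.1 ?_ |> fun h => h
  intro z hz
  by_contra hcon
  have hzr : z < S.I (g n) := EReal.coe_lt_coe_iff.1 (not_le.1 hcon)
  obtain ⟨m, hm⟩ := (hA (S.I (g n) - z) (by linarith)).exists
  rw [S.I_add (hhL m) hn, S.I_smul _ (hgL n)] at hm
  have h5 : ((S.I (h m) : ℝ) : EReal) < z := lt_of_le_of_lt (hd m) hz
  have h6 := EReal.coe_lt_coe_iff.1 h5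
  linarith

theorem lower_eq (S : IntegralSystem X) (f : X → EReal) :
    lowerInt S f = - upperInt S (fun x => - f x) := by
  apply le_antisymm
  · refine sSup_le ?_
    rintro _ ⟨u, ⟨hu, huf⟩, rfl⟩
    exact EReal.neg_le_neg_iff.2 (sInf_le ⟨_, ⟨hu, fun x => EReal.neg_le_neg_iff.2 (huf x)⟩, rfl⟩)
  · rw [EReal.neg_le]
    refine le_sInf ?_
    rintro _ ⟨u, ⟨hu, huf⟩, rfl⟩
    rw [EReal.neg_le]
    refine le_sSup ⟨fun x => - u x, ⟨?_, fun x => EReal.neg_le.1 (huf x)⟩, ?_⟩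
    · simpa [MemLdown] using hu
    · simp [Idown]

theorem lower_le_upper (S : IntegralSystem X) (f : X → ℝ) :
    lowerInt S (fun x => (f x : EReal)) ≤ upperInt S (fun x => (f x : EReal)) := by
  refine sSup_le ?_
  rintro _ ⟨u, ⟨⟨w, hwL, hwm, hw⟩, huf⟩, rfl⟩
  refine le_sInf ?_
  rintro _ ⟨v, ⟨⟨h, hhL, hhm, hh⟩, hfv⟩, rfl⟩
  obtain ⟨c, hc, hcle⟩ := exists_lim S w hwL hwm
  obtain ⟨d, hd, hdle⟩ := exists_lim S h hhL hhm
  have h1 : c ≤ Iup S (fun x => -(u x)) := le_sSup ⟨w, hwL, hwm, hw, hc⟩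
  have h2 : d ≤ Iup S v := le_sSup ⟨h, hhL, hhm, hh, hd⟩
  refine le_trans (EReal.neg_le_neg_iff.2 h1) (le_trans ?_ h2)
  by_contra hcon
  obtain ⟨r, hr1, hr2⟩ := EReal.lt_iff_exists_real_btwn.1 (not_le.1 hcon)
  obtain ⟨r', hr1', hr2'⟩ := EReal.lt_iff_exists_real_btwn.1 hr2
  have hrr := EReal.coe_lt_coe_iff.1 hr1'
  have hA := lemA S (fun m => h m + w m) (fun m => S.add_mem (hhL m) (hwL m))
    (fun m x => add_le_add (hhm m x) (hwm m x))
    (fun x ε hε => by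
      have e1 : ((f x - ε / 2 : ℝ) : EReal) < v x :=
        lt_of_lt_of_le (EReal.coe_lt_coe_iff.2 (by linarith)) (hfv x)
      have e2 : ((-f x - ε / 2 : ℝ) : EReal) < - u x := by
        refine lt_of_lt_of_le (b := ((-f x : ℝ) : EReal))
          (EReal.coe_lt_coe_iff.2 (by linarith)) ?_
        rw [EReal.coe_neg]
        exact EReal.neg_le_neg_iff.2 (huf x)
      obtain ⟨m, hm1, hm2⟩ := (((hh x).eventually (lt_mem_nhds e1)).and
        ((hw x).eventually (lt_mem_nhds e2))).exists
      refine ⟨m, ?_⟩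
      have := EReal.coe_lt_coe_iff.1 hm1
      have := EReal.coe_lt_coe_iff.1 hm2
      simp; linarith)
  obtain ⟨m, hm⟩ := (hA (r' - r) (by linarith)).exists
  rw [S.I_add (hhL m) (hwL m)] at hm
  have a1 : S.I (h m) < r := EReal.coe_lt_coe_iff.1 (lt_of_le_of_lt (hdle m) hr1)
  have a2 : S.I (w m) < -r' := by
    apply EReal.coe_lt_coe_iff.1
    refine lt_of_le_of_lt (hcle m) ?_
    rw [EReal.coe_neg]
    exact EReal.lt_neg_comm.1 hr2'
  linarith

theorem upper_transfer {Y : Type*} (S : IntegralSystem X) (T : IntegralSystem Y)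
    (ρ : X → ℝ) (hρ : ∀ x, 0 ≤ ρ x) (φ : X → Y)
    (h1 : ∀ g ∈ T.L, (fun x => ρ x * g (φ x)) ∈ S.L)
    (h2 : ∀ g ∈ T.L, S.I (fun x => ρ x * g (φ x)) = T.I g) (g : Y → ℝ) :
    upperInt S (fun x => ((ρ x * g (φ x) : ℝ) : EReal)) ≤ upperInt T (fun y => (g y : EReal)) := by
  refine le_sInf ?_
  rintro _ ⟨G, ⟨⟨h, hhL, hhm, hh⟩, hgG⟩, rfl⟩
  obtain ⟨d, hd, hdle⟩ := exists_lim T h hhL hhm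
  refine le_trans ?_ (le_sSup ⟨h, hhL, hhm, hh, hd⟩ : d ≤ Iup T G)
  have km : ∀ n x, ρ x * h n (φ x) ≤ ρ x * h (n + 1) (φ x) := fun n x =>
    mul_le_mul_of_nonneg_left (hhm n _) (hρ x)
  have kt : ∀ x, Tendsto (fun n => ((ρ x * h n (φ x) : ℝ) : EReal)) atTop
      (𝓝 ((ρ x : EReal) * G (φ x))) := by
    intro x
    simp only [EReal.coe_mul]
    rcases (hρ x).eq_or_lt with h0 | h0
    · simp [← h0]
    · have hne : (ρ x : EReal) ≠ 0 := by exact_mod_cast h0.ne'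
      have hc : ContinuousAt (fun p : EReal × EReal => p.1 * p.2) ((ρ x : EReal), G (φ x)) :=
        EReal.continuousAt_mul (Or.inl hne) (Or.inl hne) (Or.inl (by simp)) (Or.inl (by simp))
      exact hc.tendsto.comp ((tendsto_const_nhds).prodMk_nhds (hh (φ x)))
  refine le_trans (sInf_le ⟨fun x => (ρ x : EReal) * G (φ x),
    ⟨⟨fun n x => ρ x * h n (φ x), fun n => h1 _ (hhL n), km, kt⟩, fun x => ?_⟩, rfl⟩) ?_
  · beta_reduce
    rw [EReal.coe_mul]
    exact mul_le_mul_of_nonneg_left (hgG _) (by exact_mod_cast hρ x)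
  · refine sSup_le ?_
    rintro c ⟨k, hkL, hkm, hk, hkc⟩
    refine lemKey S k (fun n x => ρ x * h n (φ x)) hkL hkm (fun n => h1 _ (hhL n)) km _ hk kt c d
      hkc (fun n => ?_)
    rw [h2 _ (hhL n)]
    exact hdle n

/-- Transfer principle: if `ρ : X → [0,∞)` and `φ : X → Y` satisfy
`ρ·(g ∘ φ) ∈ L` and `I (ρ·(g ∘ φ)) = J g` for all `g ∈ M`, then the same holds for the
Daniell extensions: `ρ·(g ∘ φ)` is `I`-integrable and `I¹ (ρ·(g ∘ φ)) = J¹ g` for every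
`J`-integrable `g`. -/
theorem transfer_principle {Y : Type*} (S : IntegralSystem X) (T : IntegralSystem Y)
    (ρ : X → ℝ) (hρ : ∀ x, 0 ≤ ρ x) (φ : X → Y)
    (h1 : ∀ g ∈ T.L, (fun x => ρ x * g (φ x)) ∈ S.L)
    (h2 : ∀ g ∈ T.L, S.I (fun x => ρ x * g (φ x)) = T.I g) :
    ∀ g : Y → ℝ, Integrable1 T g →
      Integrable1 S (fun x => ρ x * g (φ x)) ∧
      Int1 S (fun x => ρ x * g (φ x)) = Int1 T g := by
  rintro g ⟨c, hl, hu⟩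
  have hU := upper_transfer S T ρ hρ φ h1 h2 g
  have hV := upper_transfer S T ρ hρ φ h1 h2 (fun y => - g y)
  have hlu := lower_le_upper S (fun x => ρ x * g (φ x))
  have hL : lowerInt T (fun y => (g y : EReal)) ≤
      lowerInt S (fun x => ((ρ x * g (φ x) : ℝ) : EReal)) := by
    rw [lower_eq, lower_eq, EReal.neg_le_neg_iff]
    simpa only [mul_neg, EReal.coe_neg] using hV
  rw [hl] at hL
  rw [hu] at hU
  have e1 : upperInt S (fun x => ((ρ x * g (φ x) : ℝ) : EReal)) = c :=
    le_antisymm hU (hL.trans hlu)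
  have e2 : lowerInt S (fun x => ((ρ x * g (φ x) : ℝ) : EReal)) = c :=
    le_antisymm (hlu.trans hU) hL
  refine ⟨⟨c, e2, e1⟩, ?_⟩
  simp only [Int1]
  rw [e1, hu]
end

section
/- (Frullani integral.) Let f : ℝ → ℝ be a measurable function that is Lebesgue integrable on [x,y] for all 0 < x ≤ y < ∞, and assume the limits f(0+) = lim_{t→0+} f(t) and f(∞) = lim_{t→∞} f(t) exist. Then for all reals 0 < a < b, the improper integral ∫_0^∞ (f(bt) − f(at))/t dt converges, i.e., the limit of ∫_x^y (f(bt) − f(at))/t dt as x → 0+ and y → ∞ exists, and its value is (f(∞) − f(0+))·log(b/a). -/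
open Filter Topology MeasureTheory

/-- Frullani's integral: if `f` is measurable, integrable on every `[x,y] ⊂ (0,∞)`, and has
limits `f0 = lim_{t→0+} f t` and `finf = lim_{t→∞} f t`, then for `0 < a < b` the improper
integral `∫_0^∞ (f (b t) − f (a t))/t dt` converges (as `x → 0+`, `y → ∞` of `∫_x^y`) with
value `(finf − f0) · log (b/a)`. -/
theorem frullani_integral (f : ℝ → ℝ) (hmeas : Measurable f)
    (hint : ∀ x y : ℝ, 0 < x → x ≤ y → IntegrableOn f (Set.Icc x y))
    (f0 finf : ℝ)
    (h0 : Tendsto f (𝓝[>] (0 : ℝ)) (𝓝 f0))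
    (hinf : Tendsto f atTop (𝓝 finf))
    (a b : ℝ) (ha : 0 < a) (hab : a < b) :
    Tendsto (fun p : ℝ × ℝ => ∫ t in p.1..p.2, (f (b * t) - f (a * t)) / t)
      ((𝓝[>] (0 : ℝ)) ×ˢ atTop) (𝓝 ((finf - f0) * Real.log (b / a))) := by
  have hloc : LocallyIntegrableOn f (Set.Ioi (0 : ℝ)) := by
    intro x hx
    have hx0 : (0 : ℝ) < x := hx
    refine ⟨Set.Icc (x / 2) (2 * x), mem_nhdsWithin_of_mem_nhds
      (Icc_mem_nhds (by linarith) (by linarith)), hint _ _ (by linarith) (by linarith)⟩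
  have hb : 0 < b := ha.trans hab
  have h := Frullani.tendsto_intervalIntegral hloc hb ha h0 hinf
  have e : Real.log (a / b) • (f0 - finf) = (finf - f0) * Real.log (b / a) := by
    rw [Real.log_div ha.ne' hb.ne', Real.log_div hb.ne' ha.ne', smul_eq_mul]
    ring
  rw [e] at h
  refine h.congr fun p => ?_
  congr 1
  funext t
  rw [smul_eq_mul, div_eq_inv_mul]
end

section
/- (Abelian continuity of the Laplace transform.) Let 0 < a < b < ∞ and let f : ℝ → ℝ be a measurable function that is Lebesgue integrable on [x,y] for all 0 < x ≤ y < ∞, is continuous on (0,a] and on [b,∞), and whose improper integral ∫_0^∞ f(t) dt converges. Then for every r > 0 the improper integral F(r) = ∫_0^∞ e^{−rt} f(t) dt converges, the function F is continuous on (0,∞), and lim_{r→0+} F(r) = ∫_0^∞ f(t) dt. -/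
open Filter Topology MeasureTheory

lemma lap_bound (g : ℝ → ℝ) (x y r M : ℝ) (hx : 0 ≤ x) (hxy : x ≤ y) (hr : 0 ≤ r)
    (hg : ContinuousOn g (Set.Icc x y))
    (hM : ∀ s ∈ Set.Icc x y, |∫ t in x..s, g t| ≤ M) :
    |∫ t in x..y, Real.exp (-r * t) * g t| ≤ M := by
  have hM0 : 0 ≤ M := (abs_nonneg _).trans (hM x ⟨le_rfl, hxy⟩)
  have hgi : IntervalIntegrable g volume x y := hg.intervalIntegrable_of_Icc hxy
  have hG : ContinuousOn (fun s => ∫ t in x..s, g t) (Set.uIcc x y) := by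
    apply intervalIntegral.continuousOn_primitive_interval
    rw [Set.uIcc_of_le hxy]
    exact hg.integrableOn_Icc
  have hE : ∀ s : ℝ, HasDerivAt (fun t => Real.exp (-r * t)) (-(r * Real.exp (-r * s))) s := by
    intro s
    have h : HasDerivAt (fun t => Real.exp (-r * t)) (Real.exp (-r * s) * (-r * 1)) s :=
      ((hasDerivAt_id s).const_mul (-r)).exp
    have e : Real.exp (-r * s) * (-r * 1) = -(r * Real.exp (-r * s)) := by ring
    rwa [e] at h
  have hEc : Continuous (fun t => Real.exp (-r * t)) := by fun_prop
  have key := intervalIntegral.integral_mul_deriv_eq_deriv_mul_of_hasDerivAt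
    (a := x) (b := y) (u := fun t => Real.exp (-r * t)) (v := fun s => ∫ t in x..s, g t)
    (u' := fun s => -(r * Real.exp (-r * s))) (v' := g) hEc.continuousOn hG
    (fun s _ => hE s) (by
      intro s hs
      rw [min_eq_left hxy, max_eq_right hxy] at hs
      have hn : Set.Icc x y ∈ 𝓝 s := Icc_mem_nhds hs.1 hs.2
      refine intervalIntegral.integral_hasDerivAt_right
        ((hg.mono (Set.Icc_subset_Icc_right hs.2.le)).intervalIntegrable_of_Icc hs.1.le) ?_
        (hg.continuousAt hn)
      exact (hg.mono Set.Ioo_subset_Icc_self).stronglyMeasurableAtFilter isOpen_Ioo s hs)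
    (by apply Continuous.intervalIntegrable; fun_prop) hgi
  rw [key]
  simp only [intervalIntegral.integral_same, mul_zero, sub_zero]
  have hint2 : ∫ s in x..y, r * Real.exp (-r * s) = Real.exp (-r * x) - Real.exp (-r * y) := by
    have := intervalIntegral.integral_eq_sub_of_hasDerivAt (a := x) (b := y)
      (f := fun t => Real.exp (-r * t)) (fun s _ => hE s)
      (by apply Continuous.intervalIntegrable; fun_prop)
    rw [intervalIntegral.integral_neg] at this
    linarith
  have h2 : |∫ s in x..y, -(r * Real.exp (-r * s)) * ∫ t in x..s, g t| ≤
      ∫ s in x..y, (r * Real.exp (-r * s)) * M := by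
    rw [← Real.norm_eq_abs]
    apply intervalIntegral.norm_integral_le_of_norm_le hxy
    · refine Eventually.of_forall fun s hs => ?_
      rw [norm_mul, norm_neg, Real.norm_eq_abs, Real.norm_eq_abs,
        abs_of_nonneg (by positivity : 0 ≤ r * Real.exp (-r * s))]
      exact mul_le_mul_of_nonneg_left (hM s ⟨hs.1.le, hs.2⟩) (by positivity)
    · apply Continuous.intervalIntegrable; fun_prop
  rw [intervalIntegral.integral_mul_const, hint2] at h2
  have h1 : |Real.exp (-r * y) * ∫ t in x..y, g t| ≤ Real.exp (-r * y) * M := by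
    rw [abs_mul, abs_of_pos (Real.exp_pos _)]
    exact mul_le_mul_of_nonneg_left (hM y ⟨hxy, le_rfl⟩) (Real.exp_pos _).le
  have h3 : Real.exp (-r * x) ≤ 1 := by
    rw [Real.exp_le_one_iff]; nlinarith [mul_nonneg hr hx]
  refine (abs_sub _ _).trans ?_
  nlinarith

lemma lap_bound' (g : ℝ → ℝ) (S : Set ℝ) (hS : S.OrdConnected) (hS0 : ∀ s ∈ S, 0 ≤ s)
    (hg : ContinuousOn g S) (M r : ℝ) (hr : 0 ≤ r)
    (hM : ∀ x ∈ S, ∀ y ∈ S, |∫ t in x..y, g t| ≤ M) (x y : ℝ) (hx : x ∈ S) (hy : y ∈ S) :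
    |∫ t in x..y, Real.exp (-r * t) * g t| ≤ M := by
  have main : ∀ x ∈ S, ∀ y ∈ S, x ≤ y → |∫ t in x..y, Real.exp (-r * t) * g t| ≤ M := by
    intro x hx y hy hxy
    exact lap_bound g x y r M (hS0 x hx) hxy hr (hg.mono (hS.out hx hy))
      (fun s hs => hM x hx s (hS.out hx hy hs))
  rcases le_total x y with h | h
  · exact main x hx y hy h
  · rw [intervalIntegral.integral_symm, abs_neg]
    exact main y hy x hx h

/-- Abelian continuity of the Laplace transform: let `0 < a < b`, let `f` be measurable,
integrable on every `[x,y] ⊂ (0,∞)`, continuous on `(0,a]` and on `[b,∞)`, and suppose the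
improper integral `∫_0^∞ f t dt` converges with value `c`.  Then for every `r > 0` the
improper integral `F r = ∫_0^∞ e^{−r t} f t dt` converges, `F` is continuous on `(0,∞)`,
and `F r → c` as `r → 0+`. -/
theorem laplace_transform_continuity (a b : ℝ) (ha : 0 < a) (hab : a < b)
    (f : ℝ → ℝ) (hmeas : Measurable f)
    (hint : ∀ x y : ℝ, 0 < x → x ≤ y → IntegrableOn f (Set.Icc x y))
    (hca : ContinuousOn f (Set.Ioc 0 a)) (hcb : ContinuousOn f (Set.Ici b))
    (c : ℝ)
    (hconv : Tendsto (fun p : ℝ × ℝ => ∫ t in p.1..p.2, f t)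
      ((𝓝[>] (0 : ℝ)) ×ˢ atTop) (𝓝 c)) :
    ∃ F : ℝ → ℝ,
      (∀ r : ℝ, 0 < r →
        Tendsto (fun p : ℝ × ℝ => ∫ t in p.1..p.2, Real.exp (-r * t) * f t)
          ((𝓝[>] (0 : ℝ)) ×ˢ atTop) (𝓝 (F r))) ∧
      ContinuousOn F (Set.Ioi 0) ∧
      Tendsto F (𝓝[>] (0 : ℝ)) (𝓝 c) := by
  have hfi : ∀ x y : ℝ, 0 < x → 0 < y → IntervalIntegrable f volume x y := by
    have h1 : ∀ x y : ℝ, 0 < x → x ≤ y → IntervalIntegrable f volume x y := by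
      intro x y hx hxy
      rw [intervalIntegrable_iff_integrableOn_Icc_of_le hxy]
      exact hint x y hx hxy
    intro x y hx hy
    rcases le_total x y with h | h
    · exact h1 x y hx h
    · exact (h1 y x hy h).symm
  have hei : ∀ r x y : ℝ, 0 < x → 0 < y →
      IntervalIntegrable (fun t => Real.exp (-r * t) * f t) volume x y := by
    intro r x y hx hy
    exact (hfi x y hx hy).continuousOn_mul (by fun_prop)
  set L : Filter (ℝ × ℝ) := (𝓝[>] (0 : ℝ)) ×ˢ atTop with hL
  let Φ : ℝ × ℝ → ℝ → ℝ := fun p r => ∫ t in p.1..p.2, Real.exp (-r * t) * f t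
  have hUC : UniformCauchySeqOn Φ L (Set.Ici 0) := by
    intro u hu
    obtain ⟨ε, hε, hεu⟩ := Metric.mem_uniformity_dist.1 hu
    have h1 := (Metric.tendsto_nhds.1 hconv) (ε / 5) (by positivity)
    obtain ⟨P, hP, Q, hQ, hPQ⟩ := eventually_prod_iff.1 h1
    obtain ⟨δ, hδ, hPδ⟩ := (mem_nhdsGT_iff_exists_Ioo_subset).1 hP
    obtain ⟨N, hN⟩ := eventually_atTop.1 hQ
    have hδ0 : (0:ℝ) < δ := hδ
    have hb : 0 < b := ha.trans hab
    set S : Set ℝ := Set.Ioo 0 (min δ a) with hS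
    set T : Set ℝ := Set.Ici (max N b) with hT
    have hSp : ∀ s ∈ S, 0 < s := fun s hs => hs.1
    have hTp : ∀ s ∈ T, 0 < s := fun s hs => hb.trans_le ((le_max_right _ _).trans hs)
    have hST : ∀ x ∈ S, ∀ y ∈ T, |(∫ t in x..y, f t) - c| < ε / 5 := by
      intro x hx y hy
      have := hPQ (hPδ ⟨hx.1, hx.2.trans_le (min_le_left _ _)⟩)
        (hN y ((le_max_left _ _).trans hy))
      simpa [Real.dist_eq] using this
    have hSne : ∃ x, x ∈ S := Set.nonempty_Ioo.2 (lt_min hδ0 ha)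
    obtain ⟨x₀, hx₀⟩ := hSne
    have hy₀ : max N b ∈ T := Set.self_mem_Ici
    have hSS : ∀ x ∈ S, ∀ y ∈ S, |∫ t in x..y, f t| ≤ 2 * ε / 5 := by
      intro x hx y hy
      have e := intervalIntegral.integral_add_adjacent_intervals
        (hfi x y (hSp x hx) (hSp y hy)) (hfi y _ (hSp y hy) (hTp _ hy₀))
      have e1 := abs_lt.1 (hST x hx _ hy₀)
      have e2 := abs_lt.1 (hST y hy _ hy₀)
      rw [abs_le]; constructor <;> linarith [e1.1, e1.2, e2.1, e2.2]
    have hTT : ∀ x ∈ T, ∀ y ∈ T, |∫ t in x..y, f t| ≤ 2 * ε / 5 := by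
      intro x hx y hy
      have e := intervalIntegral.integral_add_adjacent_intervals
        (hfi x₀ x (hSp x₀ hx₀) (hTp x hx)) (hfi x y (hTp x hx) (hTp y hy))
      have e1 := abs_lt.1 (hST x₀ hx₀ _ hx)
      have e2 := abs_lt.1 (hST x₀ hx₀ _ hy)
      rw [abs_le]; constructor <;> linarith [e1.1, e1.2, e2.1, e2.2]
    have hSm : S ∈ 𝓝[>] (0:ℝ) := Ioo_mem_nhdsGT (lt_min hδ0 ha)
    have hTm : T ∈ (atTop : Filter ℝ) := Ici_mem_atTop _
    have hm : S ×ˢ T ∈ L := prod_mem_prod hSm hTm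
    filter_upwards [prod_mem_prod hm hm] with q hq r hr
    obtain ⟨⟨hx, hy⟩, hx', hy'⟩ := hq
    apply hεu
    rw [Real.dist_eq]
    have b1 := lap_bound' f S Set.ordConnected_Ioo (fun s hs => (hSp s hs).le)
      (hca.mono fun s hs => ⟨hs.1, (hs.2.trans_le (min_le_right _ _)).le⟩) _ r hr hSS _ _ hx hx'
    have b2 := lap_bound' f T Set.ordConnected_Ici (fun s hs => (hTp s hs).le)
      (hcb.mono (Set.Ici_subset_Ici.2 (le_max_right _ _))) _ r hr hTT _ _ hy' hy
    have e1 := intervalIntegral.integral_add_adjacent_intervals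
        (hei r _ _ (hSp _ hx) (hSp _ hx')) (hei r _ _ (hSp _ hx') (hTp _ hy'))
    have e2 := intervalIntegral.integral_add_adjacent_intervals
        (hei r _ _ (hSp _ hx) (hTp _ hy')) (hei r _ _ (hTp _ hy') (hTp _ hy))
    have b1 := abs_le.1 b1
    have b2 := abs_le.1 b2
    simp only [Φ]
    rw [abs_lt]; constructor <;> linarith [b1.1, b1.2, b2.1, b2.2]
  have hev : ∀ᶠ p in L, 0 < p.1 ∧ 0 < p.2 :=
    (eventually_mem_nhdsWithin (a := (0:ℝ)) (s := Set.Ioi 0)).prod_mk (eventually_gt_atTop (0:ℝ))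
  have hcont : ∀ p : ℝ × ℝ, 0 < p.1 → 0 < p.2 → ContinuousOn (Φ p) (Set.Ici 0) := by
    intro p h1 h2 r hr
    refine intervalIntegral.continuousWithinAt_of_dominated_interval (bound := fun t => |f t|)
      ?_ ?_ (hfi _ _ h1 h2).abs ?_
    · refine Eventually.of_forall fun r => ?_
      exact ((by fun_prop : Measurable fun t => Real.exp (-r * t)).mul hmeas).aestronglyMeasurable
    · filter_upwards [self_mem_nhdsWithin] with r hr
      refine Eventually.of_forall fun t ht => ?_
      have ht0 : 0 < t := (lt_min h1 h2).trans ht.1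
      rw [norm_mul, Real.norm_eq_abs, Real.norm_eq_abs, abs_of_pos (Real.exp_pos _)]
      apply mul_le_of_le_one_left (abs_nonneg _)
      rw [Real.exp_le_one_iff]
      nlinarith [mul_nonneg (Set.mem_Ici.1 hr) ht0.le]
    · refine Eventually.of_forall fun t ht => ?_
      apply Continuous.continuousWithinAt
      fun_prop
  have hlim : ∀ r : ℝ, ∃ l : ℝ, 0 ≤ r → Tendsto (fun p => Φ p r) L (𝓝 l) := by
    intro r
    by_cases hr : 0 ≤ r
    · obtain ⟨l, hl⟩ := cauchy_iff_exists_le_nhds.1 (hUC.cauchy_map (x := r) hr)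
      exact ⟨l, fun _ => hl⟩
    · exact ⟨0, fun h => absurd h hr⟩
  choose F hF using hlim
  have hU : TendstoUniformlyOn Φ F L (Set.Ici 0) :=
    hUC.tendstoUniformlyOn_of_tendsto fun r hr => hF r hr
  have hFc : ContinuousOn F (Set.Ici 0) :=
    hU.continuousOn (hev.mono fun p hp => hcont p hp.1 hp.2).frequently
  have hF0 : F 0 = c := by
    have h := hF 0 le_rfl
    simp only [Φ, neg_zero, zero_mul, Real.exp_zero, one_mul] at h
    exact tendsto_nhds_unique h hconv
  refine ⟨F, fun r hr => hF r hr.le, hFc.mono Set.Ioi_subset_Ici_self, ?_⟩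
  rw [← hF0]
  exact (hFc 0 Set.self_mem_Ici).mono_left (nhdsWithin_mono _ Set.Ioi_subset_Ici_self)
end

section
/- Let d ≥ 1 be an integer and let γ, β, M be reals with 0 < γ < d, β + γ > d and M > 0. Let ρ : ℝ^d → ℝ be a measurable function satisfying |ρ(y)| ≤ M·(1 + |y|)^{−β} for all y ∈ ℝ^d. Then for every x ∈ ℝ^d the function y ↦ ρ(y)/|x − y|^γ is Lebesgue integrable on ℝ^d, and the potential φ_γ(x) = ∫_{ℝ^d} ρ(y)/|x − y|^γ dy is of class C^n on ℝ^d, where n ≥ 0 is the largest integer with n < d − γ. -/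
open MeasureTheory

namespace PotReg

open Filter Topology Set Metric

variable {d : ℕ} {F : Type} [NormedAddCommGroup F] [NormedSpace ℝ F]

lemma integrableOn_ball (hd : 1 ≤ d) {γ : ℝ} (hγd : γ < d) :
    IntegrableOn (fun z : EuclideanSpace ℝ (Fin d) => ‖z‖ ^ (-γ)) (ball 0 1) := by
  have : Nonempty (Fin d) := ⟨⟨0, hd⟩⟩
  have : Nontrivial (EuclideanSpace ℝ (Fin d)) := inferInstance
  rw [integrableOn_fun_norm_addHaar volume (f := fun r : ℝ => r ^ (-γ))]
  have h := (intervalIntegral.integrableOn_Ioo_rpow_iff (s := (d : ℝ) - 1 - γ) (t := 1)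
    one_pos).2 (by linarith)
  refine h.congr_fun ?_ measurableSet_Ioo
  intro y hy
  have hy0 : 0 < y := hy.1
  simp only [finrank_euclideanSpace, Fintype.card_fin, smul_eq_mul]
  rw [← Real.rpow_natCast, ← Real.rpow_add hy0, Nat.cast_sub hd]
  congr 1
  push_cast
  ring

lemma far_bound {E : Type*} [NormedAddCommGroup E] {γ k R : ℝ} (hγ : 0 < γ) (hk : 0 < k)
    (x y : E) (hx : ‖x‖ ≤ R) (h : 1 ≤ k * ‖x - y‖) :
    ‖x - y‖ ^ (-γ) ≤ ((k + 1) * (1 + R)) ^ γ * (1 + ‖y‖) ^ (-γ) := by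
  have hR : 0 ≤ R := (norm_nonneg x).trans hx
  have hz : 0 < ‖x - y‖ := by
    by_contra hc
    have : ‖x - y‖ = 0 := le_antisymm (not_lt.1 hc) (norm_nonneg _)
    rw [this] at h; linarith
  have hy : ‖y‖ ≤ ‖x‖ + ‖x - y‖ := by
    have := norm_sub_le x (x - y)
    simpa using this
  have hmain : 1 + ‖y‖ ≤ ((k + 1) * (1 + R)) * ‖x - y‖ := by
    have h1 : 1 + ‖x - y‖ ≤ (k + 1) * ‖x - y‖ := by linarith
    nlinarith [mul_le_mul_of_nonneg_left h1 (by linarith : 0 ≤ 1 + R)]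
  have hc : 0 < (k + 1) * (1 + R) := by positivity
  have hyp : 0 < 1 + ‖y‖ := by positivity
  rw [Real.rpow_neg hz.le, Real.rpow_neg hyp.le, ← div_eq_mul_inv, inv_eq_one_div,
    div_le_div_iff₀ (by positivity) (by positivity), one_mul, ← Real.mul_rpow hc.le hz.le]
  exact Real.rpow_le_rpow hyp.le hmain hγ.le

lemma near_int (hd : 1 ≤ d) {γ : ℝ} (hγd : γ < d) {r : ℝ} (hr : r ≤ 1) :
    Integrable ((ball (0 : EuclideanSpace ℝ (Fin d)) r).indicator (fun z => ‖z‖ ^ (-γ))) :=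
  (integrable_indicator_iff measurableSet_ball).2
    ((integrableOn_ball hd hγd).mono_set (ball_subset_ball hr))

lemma rho_le {E : Type*} [NormedAddCommGroup E] {M β : ℝ} (hM : 0 ≤ M) (hβ : 0 ≤ β) {ρ : E → ℝ}
    (hb : ∀ y, |ρ y| ≤ M * (1 + ‖y‖) ^ (-β)) (y : E) : |ρ y| ≤ M := by
  refine (hb y).trans (mul_le_of_le_one_right hM ?_)
  exact Real.rpow_le_one_of_one_le_of_nonpos (by linarith [norm_nonneg y]) (by linarith)

lemma integrable_dec {γ β : ℝ} (h : (d : ℝ) < β + γ) :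
    Integrable (fun y : EuclideanSpace ℝ (Fin d) => (1 + ‖y‖) ^ (-β) * (1 + ‖y‖) ^ (-γ)) := by
  have := integrable_one_add_norm (E := EuclideanSpace ℝ (Fin d)) (μ := volume) (r := β + γ)
    (by simpa using h)
  refine this.congr (Eventually.of_forall fun y => ?_)
  simp only
  rw [← Real.rpow_add (by positivity)]
  congr 1; ring

lemma sm_of_cont {K : EuclideanSpace ℝ (Fin d) → F} (hK : ContinuousOn K {0}ᶜ) :
    StronglyMeasurable K :=
  hK.stronglyMeasurable_of_countable_compl (by simp)

lemma integrable_pot (hd : 1 ≤ d) {γ β M C : ℝ} (hγ : 0 < γ) (hγd : γ < d)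
    (hβγ : (d : ℝ) < β + γ) (hM : 0 ≤ M) {ρ : EuclideanSpace ℝ (Fin d) → ℝ} (hρ : Measurable ρ)
    (hb : ∀ y, |ρ y| ≤ M * (1 + ‖y‖) ^ (-β)) {K : EuclideanSpace ℝ (Fin d) → F}
    (hK : ContinuousOn K {0}ᶜ) (hC : 0 ≤ C) (hKb : ∀ z, ‖K z‖ ≤ C * ‖z‖ ^ (-γ))
    (x : EuclideanSpace ℝ (Fin d)) : Integrable (fun y => ρ y • K (x - y)) := by
  have h1 := ((near_int hd hγd le_rfl).comp_sub_left x).const_mul (M * C)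
  have h2 := (integrable_dec (d := d) hβγ).const_mul (M * C * ((1 + 1) * (1 + ‖x‖)) ^ γ)
  refine (h1.add h2).mono' ?_ (Eventually.of_forall fun y => ?_)
  · exact (hρ.stronglyMeasurable.smul
      ((sm_of_cont hK).comp_measurable (measurable_const.sub measurable_id))).aestronglyMeasurable
  · have hρ1 := rho_le hM (by linarith) hb y
    have hz := hKb (x - y)
    have e0 : 0 ≤ ‖x - y‖ ^ (-γ) := by positivity
    have e1 : 0 ≤ (1 + ‖y‖) ^ (-β) := by positivity
    have e2 : 0 ≤ (1 + ‖y‖) ^ (-γ) := by positivity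
    rw [norm_smul, Real.norm_eq_abs]
    simp only [Pi.add_apply]
    by_cases hlt : x - y ∈ ball (0 : EuclideanSpace ℝ (Fin d)) 1
    · rw [indicator_of_mem hlt]
      have : |ρ y| * ‖K (x - y)‖ ≤ M * (C * ‖x - y‖ ^ (-γ)) := by gcongr
      have : 0 ≤ M * C * ((1 + 1) * (1 + ‖x‖)) ^ γ * ((1 + ‖y‖) ^ (-β) * (1 + ‖y‖) ^ (-γ)) := by
        positivity
      linarith
    · rw [indicator_of_notMem hlt]
      have hf := far_bound hγ one_pos x y le_rfl (by simpa using hlt)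
      calc |ρ y| * ‖K (x - y)‖ ≤ (M * (1 + ‖y‖) ^ (-β)) *
            (C * (((1 + 1) * (1 + ‖x‖)) ^ γ * (1 + ‖y‖) ^ (-γ))) := by
            gcongr
            · exact hb y
            · exact hz.trans (by gcongr)
        _ = _ := by ring

/-- cutoff -/
noncomputable def chi (k : ℝ) (z : EuclideanSpace ℝ (Fin d)) : ℝ := max 0 (min 1 (k * ‖z‖ - 1))

lemma chi_cont (k : ℝ) : Continuous (chi (d := d) k) := by unfold chi; fun_prop
lemma chi_nonneg (k : ℝ) (z : EuclideanSpace ℝ (Fin d)) : 0 ≤ chi k z := le_max_left _ _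
lemma chi_le (k : ℝ) (z : EuclideanSpace ℝ (Fin d)) : chi k z ≤ 1 := by simp [chi]
lemma chi_zero {k : ℝ} {z : EuclideanSpace ℝ (Fin d)} (h : k * ‖z‖ ≤ 1) : chi k z = 0 := by
  unfold chi
  exact max_eq_left ((min_le_right _ _).trans (by linarith))
lemma chi_one {k : ℝ} {z : EuclideanSpace ℝ (Fin d)} (h : 2 ≤ k * ‖z‖) : chi k z = 1 := by
  unfold chi
  rw [min_eq_left (by linarith)]; simp

lemma chi_smul_cont {k : ℝ} {K : EuclideanSpace ℝ (Fin d) → F}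
    (hK : ContinuousOn K {0}ᶜ) : Continuous (fun z => chi k z • K z) := by
  rw [continuous_iff_continuousAt]
  intro z
  by_cases hz : z = 0
  · have hev : (fun z => chi k z • K z) =ᶠ[𝓝 z] fun _ => 0 := by
      have hc : Continuous fun w : EuclideanSpace ℝ (Fin d) => k * ‖w‖ := by fun_prop
      have : ∀ᶠ w in 𝓝 z, k * ‖w‖ < 1 :=
        hc.continuousAt.eventually (gt_mem_nhds (by simp [hz]))
      filter_upwards [this] with w hw
      rw [chi_zero hw.le, zero_smul]
    exact (continuousAt_const).congr hev.symm
  · exact (chi_cont k).continuousAt.smul (hK.continuousAt (isOpen_compl_singleton.mem_nhds hz))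

lemma continuous_pot_chi {γ β M C : ℝ} (hγ : 0 < γ)
    (hβγ : (d : ℝ) < β + γ) (hM : 0 ≤ M) {ρ : EuclideanSpace ℝ (Fin d) → ℝ} (hρ : Measurable ρ)
    (hb : ∀ y, |ρ y| ≤ M * (1 + ‖y‖) ^ (-β)) {K : EuclideanSpace ℝ (Fin d) → F}
    (hK : ContinuousOn K {0}ᶜ) (hC : 0 ≤ C) (hKb : ∀ z, ‖K z‖ ≤ C * ‖z‖ ^ (-γ))
    {k : ℝ} (hk : 0 < k) :
    Continuous (fun x => ∫ y, ρ y • (chi k (x - y) • K (x - y))) := by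
  rw [continuous_iff_continuousAt]
  intro x₀
  have hc := chi_smul_cont (k := k) hK
  refine continuousAt_of_dominated (bound := fun y => (M * C * ((k + 1) * (1 + (‖x₀‖ + 1))) ^ γ) *
    ((1 + ‖y‖) ^ (-β) * (1 + ‖y‖) ^ (-γ))) ?_ ?_ ?_ ?_
  · refine Eventually.of_forall fun x => ?_
    exact (hρ.stronglyMeasurable.smul
      (hc.comp (continuous_const.sub continuous_id)).stronglyMeasurable).aestronglyMeasurable
  · filter_upwards [ball_mem_nhds x₀ one_pos] with x hx
    refine Eventually.of_forall fun y => ?_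
    have hxR : ‖x‖ ≤ ‖x₀‖ + 1 := by
      have := norm_le_norm_add_norm_sub' x x₀
      rw [mem_ball, dist_eq_norm] at hx
      linarith
    have e1 : 0 ≤ (1 + ‖y‖) ^ (-β) := by positivity
    have e2 : 0 ≤ (1 + ‖y‖) ^ (-γ) := by positivity
    by_cases hs : k * ‖x - y‖ ≤ 1
    · rw [chi_zero hs]; simp only [zero_smul, smul_zero, norm_zero]; positivity
    · have hf := far_bound hγ hk x y hxR (not_le.1 hs).le
      rw [norm_smul, norm_smul, Real.norm_eq_abs, Real.norm_eq_abs, abs_of_nonneg (chi_nonneg _ _)]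
      calc |ρ y| * (chi k (x - y) * ‖K (x - y)‖) ≤ (M * (1 + ‖y‖) ^ (-β)) *
            (1 * (C * (((k + 1) * (1 + (‖x₀‖ + 1))) ^ γ * (1 + ‖y‖) ^ (-γ)))) := by
            gcongr
            · exact mul_nonneg (chi_nonneg _ _) (norm_nonneg _)
            · exact hb y
            · exact chi_le _ _
            · exact (hKb _).trans (by gcongr)
        _ = _ := by ring
  · exact (integrable_dec hβγ).const_mul _
  · refine Eventually.of_forall fun y => ?_
    exact ((hc.comp (continuous_id.sub continuous_const)).const_smul (ρ y)).continuousAt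

lemma near_tendsto (hd : 1 ≤ d) {γ : ℝ} (hγd : γ < d) :
    Tendsto (fun n : ℕ => ∫ z : EuclideanSpace ℝ (Fin d),
      (ball (0 : EuclideanSpace ℝ (Fin d)) (2 / ((n : ℝ) + 2))).indicator (fun z => ‖z‖ ^ (-γ)) z)
      atTop (𝓝 0) := by
  have : Nonempty (Fin d) := ⟨⟨0, hd⟩⟩
  have hlim : Tendsto (fun n : ℕ => 2 / ((n : ℝ) + 2)) atTop (𝓝 0) :=
    tendsto_const_nhds.div_atTop (tendsto_natCast_atTop_atTop.atTop_add tendsto_const_nhds)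
  have hle : ∀ n : ℕ, 2 / ((n : ℝ) + 2) ≤ 1 := fun n => by
    rw [div_le_one (by positivity)]; linarith [(Nat.cast_nonneg n : (0 : ℝ) ≤ n)]
  have := tendsto_integral_of_dominated_convergence (μ := volume) (f := fun _ => (0 : ℝ))
    (F := fun (n : ℕ) (z : EuclideanSpace ℝ (Fin d)) =>
      (ball (0 : EuclideanSpace ℝ (Fin d)) (2 / ((n : ℝ) + 2))).indicator (fun z => ‖z‖ ^ (-γ)) z)
    ((ball (0 : EuclideanSpace ℝ (Fin d)) 1).indicator (fun z => ‖z‖ ^ (-γ)))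
    (fun n => (near_int hd hγd (hle n)).aestronglyMeasurable) (near_int hd hγd le_rfl) ?_ ?_
  · simpa using this
  · intro n
    refine Eventually.of_forall fun z => ?_
    have h0 : ∀ w : EuclideanSpace ℝ (Fin d), 0 ≤ ‖w‖ ^ (-γ) := fun w => by positivity
    rw [Real.norm_eq_abs, abs_of_nonneg (indicator_nonneg (fun w _ => h0 w) z)]
    exact indicator_le_indicator_of_subset (ball_subset_ball (hle n)) h0 z
  · have : ∀ᵐ z : EuclideanSpace ℝ (Fin d), z ≠ 0 := by
      simp [ae_iff]
    filter_upwards [this] with z hz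
    refine tendsto_const_nhds.congr' ?_
    have : ∀ᶠ n : ℕ in atTop, 2 / ((n : ℝ) + 2) < ‖z‖ :=
      hlim.eventually (gt_mem_nhds (norm_pos_iff.2 hz))
    filter_upwards [this] with n hn
    rw [indicator_of_notMem]
    simp only [mem_ball, dist_zero_right, not_lt]
    exact hn.le

lemma continuous_pot (hd : 1 ≤ d) {γ β M C : ℝ} (hγ : 0 < γ) (hγd : γ < d)
    (hβγ : (d : ℝ) < β + γ) (hM : 0 ≤ M) {ρ : EuclideanSpace ℝ (Fin d) → ℝ} (hρ : Measurable ρ)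
    (hb : ∀ y, |ρ y| ≤ M * (1 + ‖y‖) ^ (-β)) {K : EuclideanSpace ℝ (Fin d) → F}
    (hK : ContinuousOn K {0}ᶜ) (hC : 0 ≤ C) (hKb : ∀ z, ‖K z‖ ≤ C * ‖z‖ ^ (-γ)) :
    Continuous (fun x => ∫ y, ρ y • K (x - y)) := by
  have hle : ∀ n : ℕ, 2 / ((n : ℝ) + 2) ≤ 1 := fun n => by
    rw [div_le_one (by positivity)]; linarith [(Nat.cast_nonneg n : (0 : ℝ) ≤ n)]
  have hu : TendstoUniformly
      (fun (n : ℕ) x => ∫ y, ρ y • (chi ((n : ℝ) + 2) (x - y) • K (x - y)))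
      (fun x => ∫ y, ρ y • K (x - y)) atTop := by
    rw [Metric.tendstoUniformly_iff]
    intro ε hε
    have ht := (near_tendsto hd hγd).const_mul (M * C)
    rw [mul_zero] at ht
    filter_upwards [ht.eventually (gt_mem_nhds hε)] with n hn x
    refine lt_of_le_of_lt ?_ hn
    have hint2 : Integrable (fun y => ρ y • (chi ((n : ℝ) + 2) (x - y) • K (x - y))) := by
      refine integrable_pot hd hγ hγd hβγ hM hρ hb (K := fun z => chi ((n : ℝ) + 2) z • K z)
        (chi_smul_cont hK).continuousOn hC (fun z => ?_) x
      rw [norm_smul, Real.norm_eq_abs, abs_of_nonneg (chi_nonneg _ _)]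
      exact (mul_le_of_le_one_left (norm_nonneg _) (chi_le _ _)).trans (hKb z)
    rw [dist_eq_norm, ← integral_sub (integrable_pot hd hγ hγd hβγ hM hρ hb hK hC hKb x) hint2]
    have hg := ((near_int hd hγd (hle n)).comp_sub_left x).const_mul (M * C)
    refine (norm_integral_le_of_norm_le hg (Eventually.of_forall fun y => ?_)).trans_eq ?_
    · have hρ1 := rho_le hM (by linarith) hb y
      have e0 : 0 ≤ ‖x - y‖ ^ (-γ) := by positivity
      by_cases hs : x - y ∈ ball (0 : EuclideanSpace ℝ (Fin d)) (2 / ((n : ℝ) + 2))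
      · rw [indicator_of_mem hs, ← smul_sub]
        have : K (x - y) - chi ((n : ℝ) + 2) (x - y) • K (x - y)
          = (1 - chi ((n : ℝ) + 2) (x - y)) • K (x - y) := by rw [sub_smul, one_smul]
        rw [this, norm_smul, norm_smul, Real.norm_eq_abs, Real.norm_eq_abs,
          abs_of_nonneg (sub_nonneg.2 (chi_le _ _))]
        calc _ ≤ M * (1 * (C * ‖x - y‖ ^ (-γ))) := by
              gcongr
              · exact mul_nonneg (sub_nonneg.2 (chi_le _ _)) (norm_nonneg _)
              · linarith [chi_nonneg ((n : ℝ) + 2) (x - y)]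
              · exact hKb _
          _ = _ := by ring
      · rw [indicator_of_notMem hs]
        have h2 : 2 ≤ ((n : ℝ) + 2) * ‖x - y‖ := by
          simp only [mem_ball, dist_zero_right, not_lt] at hs
          rw [div_le_iff₀ (by positivity)] at hs
          linarith
        rw [chi_one h2]; simp
    · rw [integral_const_mul]
      congr 1
      exact integral_sub_left_eq_self
        ((ball (0 : EuclideanSpace ℝ (Fin d)) (2 / ((n : ℝ) + 2))).indicator
          (fun z => ‖z‖ ^ (-γ))) volume x
  exact hu.continuous (Eventually.of_forall fun n =>
    continuous_pot_chi hγ hβγ hM hρ hb hK hC hKb (by positivity)).frequently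

lemma ae_line (hd : 2 ≤ d) (x h : EuclideanSpace ℝ (Fin d)) :
    ∀ᵐ y : EuclideanSpace ℝ (Fin d), ∀ t : ℝ, x + t • h - y ≠ 0 := by
  have hs : Submodule.span ℝ {h} ≠ (⊤ : Submodule ℝ (EuclideanSpace ℝ (Fin d))) := by
    intro ht
    have h1 := finrank_span_le_card (R := ℝ) ({h} : Set (EuclideanSpace ℝ (Fin d)))
    rw [ht, finrank_top] at h1
    simp at h1
    omega
  have h0 := Measure.addHaar_submodule volume _ hs
  have h1 : ∀ᵐ z : EuclideanSpace ℝ (Fin d), z ∉ (Submodule.span ℝ {h} : Set _) := by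
    rw [ae_iff]; simpa using h0
  have h2 := (Measure.measurePreserving_sub_left volume x).quasiMeasurePreserving.ae h1
  filter_upwards [h2] with y hy t ht
  apply hy
  rw [SetLike.mem_coe, Submodule.mem_span_singleton]
  refine ⟨-t, ?_⟩
  have : x + t • h - y = (x - y) + t • h := by abel
  rw [this] at ht
  rw [neg_smul]
  exact (eq_neg_of_add_eq_zero_left ht).symm

lemma pot_ftc [CompleteSpace F] (hd : 2 ≤ d) {γ δ β M C C' : ℝ} (hγ : 0 < γ) (hγd : γ < d)
    (hδ : 0 < δ) (hδd : δ < d)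
    (hβγ : (d : ℝ) < β + γ) (hβδ : (d : ℝ) < β + δ)
    (hM : 0 ≤ M) {ρ : EuclideanSpace ℝ (Fin d) → ℝ} (hρ : Measurable ρ)
    (hb : ∀ y, |ρ y| ≤ M * (1 + ‖y‖) ^ (-β)) {K : EuclideanSpace ℝ (Fin d) → F}
    {K' : EuclideanSpace ℝ (Fin d) → EuclideanSpace ℝ (Fin d) →L[ℝ] F}
    (hK : ContinuousOn K {0}ᶜ) (hC : 0 ≤ C) (hKb : ∀ z, ‖K z‖ ≤ C * ‖z‖ ^ (-γ))
    (hK' : ContinuousOn K' {0}ᶜ) (hC' : 0 ≤ C') (hKb' : ∀ z, ‖K' z‖ ≤ C' * ‖z‖ ^ (-δ))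
    (hder : ∀ z, z ≠ 0 → HasFDerivAt K (K' z) z) (x h : EuclideanSpace ℝ (Fin d)) :
    (∫ y, ρ y • K (x + h - y)) - ∫ y, ρ y • K (x - y)
      = ∫ t in (0 : ℝ)..1, (∫ y, ρ y • K' (x + t • h - y)) h := by
  have hd1 : 1 ≤ d := by omega
  have hi := fun u => integrable_pot hd1 hγ hγd hβγ hM hρ hb hK hC hKb u
  have hi' := fun u => integrable_pot hd1 hδ hδd hβδ hM hρ hb hK' hC' hKb' u
  have hprod : Integrable (Function.uncurry fun (t : ℝ) (y : EuclideanSpace ℝ (Fin d)) =>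
      ρ y • (K' (x + t • h - y) h)) ((volume.restrict (Ioc (0 : ℝ) 1)).prod volume) := by
    have hm : StronglyMeasurable (Function.uncurry fun (t : ℝ) (y : EuclideanSpace ℝ (Fin d)) =>
        ρ y • (K' (x + t • h - y) h)) := by
      have hcont : ContinuousOn (fun z => K' z h) ({0}ᶜ : Set (EuclideanSpace ℝ (Fin d))) :=
        hK'.clm_apply continuousOn_const
      refine (hρ.comp measurable_snd).stronglyMeasurable.smul
        ((sm_of_cont hcont).comp_measurable (g := fun p : ℝ × EuclideanSpace ℝ (Fin d) =>
          x + p.1 • h - p.2) ?_)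
      exact Continuous.measurable (by fun_prop)
    rw [integrable_prod_iff hm.aestronglyMeasurable]
    refine ⟨Eventually.of_forall fun t => ?_, ?_⟩
    · have := (hi' (x + t • h)).apply_continuousLinearMap h
      simpa [Function.uncurry] using this
    · have hc := continuous_pot hd1 hδ hδd hβδ hM (ρ := fun y => |ρ y|) (hρ.abs)
        (fun y => by rw [abs_abs]; exact hb y) (K := fun z => ‖K' z h‖)
        (hK'.clm_apply continuousOn_const).norm (C := C' * ‖h‖) (by positivity) (fun z => by
          rw [norm_norm]
          refine ((K' z).le_opNorm h).trans ?_
          calc _ ≤ (C' * ‖z‖ ^ (-δ)) * ‖h‖ := by gcongr; exact hKb' z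
            _ = _ := by ring)
      have hc2 : Continuous fun t : ℝ => ∫ y, |ρ y| • ‖K' (x + t • h - y) h‖ :=
        hc.comp (by fun_prop : Continuous fun t : ℝ => x + t • h)
      have := (hc2.integrableOn_Icc (a := 0) (b := 1) (μ := volume)).mono_set Ioc_subset_Icc_self
      refine this.congr (Eventually.of_forall fun t => ?_)
      simp [Function.uncurry, norm_smul]
  rw [← integral_sub (hi _) (hi _), intervalIntegral.integral_of_le zero_le_one]
  have h1 : ∀ t : ℝ, (∫ y, ρ y • K' (x + t • h - y)) h = ∫ y, ρ y • (K' (x + t • h - y) h) := by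
    intro t
    rw [ContinuousLinearMap.integral_apply (hi' _)]
    rfl
  simp_rw [h1]
  rw [integral_integral_swap hprod]
  refine integral_congr_ae ?_
  filter_upwards [ae_line hd x h] with y hy
  rw [integral_smul, ← smul_sub, ← intervalIntegral.integral_of_le zero_le_one]
  congr 1
  have hfd : ∀ t : ℝ, HasDerivAt (fun t : ℝ => K (x + t • h - y)) (K' (x + t • h - y) h) t := by
    intro t
    have hl : HasDerivAt (fun t : ℝ => x + t • h - y) h t := by
      have := (((hasDerivAt_id t).smul_const h).const_add x).sub_const y
      simpa using this
    exact (hder _ (hy t)).comp_hasDerivAt t hl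
  have hcont : Continuous fun t : ℝ => K' (x + t • h - y) h := by
    have : Continuous fun t : ℝ => K' (x + t • h - y) :=
      hK'.comp_continuous (by fun_prop) (fun t => hy t)
    exact this.clm_apply continuous_const
  rw [intervalIntegral.integral_eq_sub_of_hasDerivAt (fun t _ => hfd t)
    (hcont.intervalIntegrable _ _)]
  simp

lemma hasFDerivAt_of_ftc {E : Type} [NormedAddCommGroup E] [NormedSpace ℝ E]
    [CompleteSpace F] {f : E → F} {f' : E → E →L[ℝ] F}
    (hf' : Continuous f') (h : ∀ x h, f (x + h) - f x = ∫ t in (0 : ℝ)..1, f' (x + t • h) h)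
    (x : E) : HasFDerivAt f (f' x) x := by
  rw [hasFDerivAt_iff_isLittleO_nhds_zero, Asymptotics.isLittleO_iff]
  intro ε hε
  obtain ⟨r, hr, hball⟩ := Metric.continuousAt_iff.1 (hf'.continuousAt (x := x)) ε hε
  filter_upwards [ball_mem_nhds (0 : E) hr] with v hv
  have hc : f' x v = ∫ t in (0 : ℝ)..1, f' x v := by simp
  have hi : Continuous fun t : ℝ => f' (x + t • v) v := by fun_prop
  rw [h, hc, ← intervalIntegral.integral_sub (hi.intervalIntegrable _ _)
    (continuous_const.intervalIntegrable _ _)]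
  have := intervalIntegral.norm_integral_le_of_norm_le_const (a := 0) (b := 1)
    (f := fun t : ℝ => f' (x + t • v) v - f' x v) (C := ε * ‖v‖) ?_
  · simpa using this
  · intro t ht
    rw [uIoc_of_le zero_le_one] at ht
    have hd : dist (x + t • v) x < r := by
      rw [dist_eq_norm, add_sub_cancel_left, norm_smul, Real.norm_eq_abs, abs_of_pos ht.1]
      rw [mem_ball, dist_zero_right] at hv
      exact (mul_le_of_le_one_left (norm_nonneg _) ht.2).trans_lt hv
    have := hball hd
    rw [dist_eq_norm] at this
    rw [← sub_apply]
    exact ((f' (x + t • v) - f' x).le_opNorm v).trans (by gcongr)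

lemma homog_bound {γ : ℝ} (hγ : 0 < γ) {K : EuclideanSpace ℝ (Fin d) → F}
    (hK : ContinuousOn K {0}ᶜ) (hh : ∀ c : ℝ, 0 < c → ∀ z, K (c • z) = c ^ (-γ) • K z) :
    ∃ C, 0 ≤ C ∧ ∀ z, ‖K z‖ ≤ C * ‖z‖ ^ (-γ) := by
  have hcomp : IsCompact (sphere (0 : EuclideanSpace ℝ (Fin d)) 1) := isCompact_sphere _ _
  obtain ⟨C, hC⟩ := hcomp.exists_bound_of_continuousOn (hK.mono (fun z hz => by
    rintro (rfl : z = 0); simp at hz))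
  refine ⟨max C 0, le_max_right _ _, fun z => ?_⟩
  by_cases hz : z = 0
  · subst hz
    have h2 := hh 2 two_pos 0
    rw [smul_zero] at h2
    have hlt : (2 : ℝ) ^ (-γ) < 1 := Real.rpow_lt_one_of_one_lt_of_neg one_lt_two (by linarith)
    have h3 : (1 - (2 : ℝ) ^ (-γ)) • K 0 = 0 := by rw [sub_smul, one_smul, ← h2, sub_self]
    have h4 : K 0 = 0 := (smul_eq_zero.1 h3).resolve_left (by linarith)
    rw [h4, norm_zero]; positivity
  · have hn : 0 < ‖z‖ := norm_pos_iff.2 hz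
    have h1 := hh ‖z‖ hn (‖z‖⁻¹ • z)
    rw [smul_inv_smul₀ hn.ne'] at h1
    rw [h1, norm_smul, Real.norm_eq_abs, abs_of_nonneg (by positivity), mul_comm]
    gcongr
    refine (hC _ ?_).trans (le_max_left _ _)
    simp [norm_smul, hn.ne']

theorem pot_contDiff (n : ℕ) : ∀ {F : Type} [NormedAddCommGroup F] [NormedSpace ℝ F]
    [CompleteSpace F], 1 ≤ d → ∀ {γ β M : ℝ}, 0 < γ → γ + n < d →
    (d : ℝ) < β + γ → 0 ≤ M → ∀ {ρ : EuclideanSpace ℝ (Fin d) → ℝ}, Measurable ρ →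
    (∀ y, |ρ y| ≤ M * (1 + ‖y‖) ^ (-β)) → ∀ {K : EuclideanSpace ℝ (Fin d) → F},
    ContDiffOn ℝ (⊤ : ℕ∞) K {0}ᶜ → (∀ c : ℝ, 0 < c → ∀ z, K (c • z) = c ^ (-γ) • K z) →
    ContDiff ℝ n (fun x => ∫ y, ρ y • K (x - y)) := by
  induction n with
  | zero =>
    intro F _ _ _ hd γ β M hγ hγd hβγ hM ρ hρ hb K hK hh
    obtain ⟨C, hC, hKb⟩ := homog_bound hγ hK.continuousOn hh
    rw [Nat.cast_zero, contDiff_zero]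
    exact continuous_pot hd hγ (by simpa using hγd) hβγ hM hρ hb hK.continuousOn hC hKb
  | succ n ih =>
    intro F _ _ _ hd γ β M hγ hγd hβγ hM ρ hρ hb K hK hh
    push_cast at hγd
    have hn0 : (0 : ℝ) ≤ n := Nat.cast_nonneg n
    have hd2 : 2 ≤ d := by
      have : (1 : ℝ) < d := by linarith
      exact_mod_cast this
    obtain ⟨C, hC, hKb⟩ := homog_bound hγ hK.continuousOn hh
    have hK' : ContDiffOn ℝ (⊤ : ℕ∞) (fderiv ℝ K) {0}ᶜ :=
      hK.fderiv_of_isOpen isOpen_compl_singleton (by simp)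
    have hh' : ∀ c : ℝ, 0 < c → ∀ z, fderiv ℝ K (c • z) = c ^ (-(γ + 1)) • fderiv ℝ K z := by
      intro c hc z
      have h1 := fderiv_comp_smul (𝕜 := ℝ) (f := K) (x := z) (c := c)
      have h2 : (fun w => K (c • w)) = fun w => c ^ (-γ) • K w := funext (hh c hc)
      have h3 : fderiv ℝ (fun w => c ^ (-γ) • K w) z = c ^ (-γ) • fderiv ℝ K z := by
        exact congrFun (fderiv_const_smul_field (f := K) (c ^ (-γ))) z
      rw [h2, h3] at h1
      have h4 : fderiv ℝ K (c • z) = c⁻¹ • (c ^ (-γ) • fderiv ℝ K z) := by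
        rw [h1, inv_smul_smul₀ hc.ne']
      rw [h4, smul_smul, neg_add, Real.rpow_add hc, Real.rpow_neg_one, mul_comm]
    obtain ⟨C', hC', hKb'⟩ := homog_bound (by linarith) hK'.continuousOn hh'
    have hder : ∀ z, z ≠ 0 → HasFDerivAt K (fderiv ℝ K z) z := fun z hz =>
      ((hK.contDiffAt (isOpen_compl_singleton.mem_nhds hz)).differentiableAt (by simp)).hasFDerivAt
    rw [Nat.cast_succ, contDiff_succ_iff_hasFDerivAt]
    refine ⟨fun x => ∫ y, ρ y • fderiv ℝ K (x - y),
      ih hd (by linarith) (by linarith) (by linarith) hM hρ hb hK' hh', ?_⟩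
    refine hasFDerivAt_of_ftc ?_ ?_
    · exact continuous_pot hd (by linarith) (by linarith) (by linarith) hM hρ hb
        hK'.continuousOn hC' hKb'
    · intro x h
      exact pot_ftc hd2 hγ (by linarith) (by linarith) (by linarith) hβγ (by linarith) hM hρ hb
        hK.continuousOn hC hKb hK'.continuousOn hC' hKb' hder x h

end PotReg

/-- Regularity of Riesz/Coulomb potentials: let `0 < γ < d`, `β + γ > d`, `M > 0`, and let
`ρ : ℝ^d → ℝ` be measurable with `|ρ y| ≤ M (1 + |y|)^{−β}`.  Then for every `x` the
function `y ↦ ρ y / |x − y|^γ` is Lebesgue integrable, and the potential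
`φ_γ x = ∫ ρ y / |x − y|^γ dy` is of class `C^n` for every integer `n < d − γ`
(equivalently, of class `C^n` for the largest such `n`). -/
theorem potential_regularity (d : ℕ) (hd : 1 ≤ d) (γ β M : ℝ)
    (hγ0 : 0 < γ) (hγd : γ < d) (hβγ : (d : ℝ) < β + γ) (hM : 0 < M)
    (ρ : EuclideanSpace ℝ (Fin d) → ℝ) (hmeas : Measurable ρ)
    (hbound : ∀ y, |ρ y| ≤ M * (1 + ‖y‖) ^ (-β)) :
    (∀ x, Integrable (fun y => ρ y / ‖x - y‖ ^ γ)) ∧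
    (∀ n : ℕ, (n : ℝ) < (d : ℝ) - γ →
      ContDiff ℝ n (fun x => ∫ y, ρ y / ‖x - y‖ ^ γ)) := by
  have heq : ∀ x, (fun y => ρ y / ‖x - y‖ ^ γ) = fun y => ρ y • (‖x - y‖ ^ (-γ)) := by
    intro x; funext y
    rw [Real.rpow_neg (norm_nonneg _), div_eq_mul_inv, smul_eq_mul]
  have hK : ContDiffOn ℝ (⊤ : ℕ∞) (fun z : EuclideanSpace ℝ (Fin d) => ‖z‖ ^ (-γ)) {0}ᶜ := by
    intro z hz
    have hz' : z ≠ 0 := hz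
    exact ((contDiffAt_norm ℝ hz').rpow_const_of_ne (norm_ne_zero_iff.2 hz')).contDiffWithinAt
  have hh : ∀ c : ℝ, 0 < c → ∀ z : EuclideanSpace ℝ (Fin d),
      ‖c • z‖ ^ (-γ) = c ^ (-γ) • ‖z‖ ^ (-γ) := by
    intro c hc z
    rw [norm_smul, Real.norm_eq_abs, abs_of_pos hc, Real.mul_rpow hc.le (norm_nonneg _),
      smul_eq_mul]
  refine ⟨fun x => ?_, fun n hn => ?_⟩
  · rw [heq]
    exact PotReg.integrable_pot hd hγ0 hγd hβγ hM.le hmeas hbound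
      (K := fun z => ‖z‖ ^ (-γ)) hK.continuousOn zero_le_one
      (fun z => by rw [one_mul, Real.norm_eq_abs, abs_of_nonneg (by positivity)]) x
  · simp_rw [heq]
    exact PotReg.pot_contDiff n hd hγ0 (by linarith) hβγ hM.le hmeas hbound
      (K := fun z => ‖z‖ ^ (-γ)) hK hh
end
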